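/- For every F ∈ ℕ and L ∈ [1,∞) there exist constants E, E′, E″, E‴ > 0 such that the following holds. Let R be a commutative ring, let (X,w) be a properly weighted R-oriented d-poset with d ≥ 2, lower irregularity L(X) ≤ L, and F^max_{0,2}(X) ≤ F and F^max_{1,2}(X) ≤ F, and let 𝓕 be an R-sheaf on X. Let ε, ε′ > 0 and α_0, β_0, α_{−1}, α_{‖}, β_{‖} ≥ 0, β_{−1} > 0, and assume: (1a) cbe_{−1}(X_v, w_v, 𝓕_v) ≥ ε for every v ∈ X(0); (1b) cbe_{−1}(X_e, w_e, 𝓕_e) ≥ ε′ for every e ∈ X(1); (1c) cbe_0(X_v, w_v, 𝓕_v) ≥ ε′ for every v ∈ X(0); (2a) ugr(X_v, w_v) is an (α_0, β_0)-skeleton expander for every v ∈ X(0); (2b) ugr(X, w) is an (α_{−1}, β_{−1})-skeleton expander; (2c) the related weighted hypergraph NI^{1,1,2}(X,w) is an (α_{‖}, β_{‖})-skeleton expander. If α_{−1} < E·ε and there exist h_{−1}, h_0, h_{‖} ∈ (0,1] with (α_0 + β_0·h_0) + (α_{‖} + β_{‖}·h_{‖}) + (α_{−1} + β_{−1}·h_{−1})/h_0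 ≤ E′·ε′, then ‖d_0 f‖_w ≥ (E″/(h_0^{−1}·h_{−1}^{−1} + h_{‖}^{−1}))·dist_w(f, Z^0(X,𝓕)) for every f ∈ C^0(X,𝓕), and ‖f‖_w ≥ E‴·(E·ε − α_{−1})/β_{−1} for every f ∈ Z^0(X,𝓕) not lying in B^0(X,𝓕). -/

import Mathlib

open scoped Classical

noncomputable section

namespace FK

variable {V : Type*} [Fintype V] [PartialOrder V]

/-- The set of faces of dimension `i`. -/
def faces (dim : V → ℤ) (i : ℤ) : Finset V :=
  Finset.univ.filter fun x => dim x = i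

/-- The set of faces of dimension `i` lying above `z`. -/
def facesAbove (dim : V → ℤ) (i : ℤ) (z : V) : Finset V :=
  Finset.univ.filter fun x => dim x = i ∧ z ≤ x

/-- The set of faces of dimension `i` lying below `y`. -/
def facesBelow (dim : V → ℤ) (i : ℤ) (y : V) : Finset V :=
  Finset.univ.filter fun x => dim x = i ∧ x ≤ y

/-- The set of faces of dimension `j` lying between `x` and `z`. -/
def facesBetween (dim : V → ℤ) (j : ℤ) (x z : V) : Finset V :=
  Finset.univ.filter fun y => dim y = j ∧ x ≤ y ∧ y ≤ z

/-- Total weight of a finite set of faces. -/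
def wsum (w : V → ℝ) (A : Finset V) : ℝ := ∑ x ∈ A, w x

/-- `(V, dim)` is a `d`-poset with least face `bot` (of dimension `-1`). -/
structure IsDPoset (dim : V → ℤ) (d : ℤ) (bot : V) : Prop where
  dim_strictMono : ∀ ⦃x y : V⦄, x < y → dim x < dim y
  dim_covBy : ∀ ⦃x y : V⦄, x ⋖ y → dim y = dim x + 1
  bot_le : ∀ x : V, bot ≤ x
  dim_bot : dim bot = -1
  pure : ∀ x : V, ∃ y : V, x ≤ y ∧ dim y = d

/-- Graded poset axioms. -/
structure IsGraded (dim : V → ℤ) : Prop where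
  dim_strictMono : ∀ ⦃x y : V⦄, x < y → dim x < dim y
  dim_covBy : ∀ ⦃x y : V⦄, x ⋖ y → dim y = dim x + 1

/-- `w` is a proper weight function on the `d`-poset `(V, dim)`. -/
structure IsProperWeight (dim : V → ℤ) (d : ℤ) (w : V → ℝ) : Prop where
  pos : ∀ x : V, 0 < w x
  total : wsum w (faces dim d) = 1
  eq : ∀ x : V, w x = ∑ y ∈ facesAbove dim d x, w y / ((facesBelow dim (dim x) y).card : ℝ)

/-- The weight function induced on the link of `z`. -/
def linkWeight (dim : V → ℤ) (d : ℤ) (w : V → ℝ) (z x : V) : ℝ :=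
  (wsum w (facesAbove dim d z))⁻¹ *
    ∑ y ∈ facesAbove dim d x, w y / ((facesBetween dim (dim x) z y).card : ℝ)

/-- An `R`-orientation on the graded poset `(V, dim)`. -/
structure IsOrientation (R : Type*) [CommRing R] (dim : V → ℤ) (sgn : V → V → R) : Prop where
  isUnit : ∀ ⦃x y : V⦄, x ⋖ y → IsUnit (sgn y x)
  sum_eq_zero : ∀ ⦃x z : V⦄, x ≤ z → dim z = dim x + 2 →
    ∑ y ∈ Finset.univ.filter (fun y => x < y ∧ y < z), sgn z y * sgn y x = 0

/-- The restriction maps of a sheaf compose. -/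
structure IsSheafRes (R : Type*) [CommRing R] (F : V → Type*)
    [∀ x, AddCommGroup (F x)] [∀ x, Module R (F x)]
    (res : ∀ x y : V, x ≤ y → (F x →ₗ[R] F y)) : Prop where
  refl : ∀ x : V, res x x le_rfl = LinearMap.id
  trans : ∀ ⦃x y z : V⦄ (hxy : x ≤ y) (hyz : y ≤ z),
    (res y z hyz).comp (res x y hxy) = res x z (hxy.trans hyz)

/-- `i`-cochains with coefficients in the sheaf `F`. -/
abbrev Cochain (dim : V → ℤ) (F : V → Type*) (i : ℤ) : Type _ :=
  ∀ x : {x : V // dim x = i}, F x.1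

/-- Cochains on the link of `u`, indexed by the ambient dimension `i`
(i.e. link-dimension `i - dim u - 1`). -/
abbrev LCochain (dim : V → ℤ) (F : V → Type*) (u : V) (i : ℤ) : Type _ :=
  ∀ x : {x : V // dim x = i ∧ u ≤ x}, F x.1

section Sheaf

variable {R : Type*} [CommRing R] (dim : V → ℤ) (F : V → Type*)
  [∀ x, AddCommGroup (F x)] [∀ x, Module R (F x)]
  (sgn : V → V → R) (res : ∀ x y : V, x ≤ y → (F x →ₗ[R] F y))
  (w : V → ℝ) (d : ℤ)

/-- The coboundary map, from dimension `i` to dimension `j` (intended: `j = i + 1`). -/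
def coboundary (i j : ℤ) (f : Cochain dim F i) : Cochain dim F j := fun y =>
  ∑ x : {x : V // dim x = i},
    if h : x.1 ≤ y.1 then sgn y.1 x.1 • res x.1 y.1 h (f x) else 0

/-- The coboundary map on the link of `u`. -/
def lcoboundary (u : V) (i j : ℤ) (f : LCochain dim F u i) : LCochain dim F u j := fun y =>
  ∑ x : {x : V // dim x = i ∧ u ≤ x},
    if h : x.1 ≤ y.1 then sgn y.1 x.1 • res x.1 y.1 h (f x) else 0

/-- Weighted Hamming norm of a cochain. -/
def cnorm {i : ℤ} (f : Cochain dim F i) : ℝ :=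
  ∑ x : {x : V // dim x = i}, if f x ≠ 0 then w x.1 else 0

/-- Norm of a cochain on the link of `u`, w.r.t. the weight induced on the link. -/
def lnorm (u : V) {i : ℤ} (f : LCochain dim F u i) : ℝ :=
  ∑ x : {x : V // dim x = i ∧ u ≤ x}, if f x ≠ 0 then linkWeight dim d w u x.1 else 0

/-- `i`-cocycles. -/
def cocycles (i : ℤ) : Set (Cochain dim F i) :=
  {f | coboundary dim F sgn res i (i + 1) f = 0}

/-- `i`-coboundaries. -/
def coboundariesSet (i : ℤ) : Set (Cochain dim F i) :=
  {f | ∃ g : Cochain dim F (i - 1), coboundary dim F sgn res (i - 1) i g = f}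

/-- Weighted Hamming distance from a cochain to a set of cochains. -/
def distTo {i : ℤ} (f : Cochain dim F i) (S : Set (Cochain dim F i)) : ℝ :=
  sInf ((fun g => cnorm dim F w (f - g)) '' S)

/-- Coboundaries on the link of `u`, at ambient dimension `i`. -/
def lcoboundariesSet (u : V) (i : ℤ) : Set (LCochain dim F u i) :=
  {f | ∃ g : LCochain dim F u (i - 1), lcoboundary dim F sgn res u (i - 1) i g = f}

/-- `cbe_{i - dim u - 1}(X_u, w_u, F_u) ≥ ε`, expressed at ambient dimension `i`. -/
def LinkCbeGe (u : V) (i : ℤ) (ε : ℝ) : Prop :=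
  ∀ f : LCochain dim F u i,
    ε * sInf ((fun g => lnorm dim F w d u (f - g)) '' lcoboundariesSet dim F sgn res u i)
      ≤ lnorm dim F w d u (lcoboundary dim F sgn res u i (i + 1) f)

/-- Extension of a link cochain by zero. -/
def extendByZero (u : V) {i : ℤ} (b : LCochain dim F u i) : Cochain dim F i := fun x =>
  if h : u ≤ x.1 then b ⟨x.1, x.2, h⟩ else 0

/-- `f` is mock `q`-locally minimal at `u`. -/
def MockMinAt (q : ℝ) (m : ℤ) (f : Cochain dim F m) (u : V) : Prop :=
  ∀ g : LCochain dim F u (m - 1),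
    cnorm dim F w f ≤
      cnorm dim F w (f + extendByZero dim F u (lcoboundary dim F sgn res u (m - 1) m g)) +
        q * w u

/-- `f` is mock `q`-locally minimal. -/
def MockMin (q : ℝ) (m : ℤ) (f : Cochain dim F m) : Prop :=
  ∀ u : V, 0 ≤ dim u → dim u ≤ m → MockMinAt dim F sgn res w q m f u

end Sheaf

/-- `ugr(X_u, w_u)` is an `(α, β)`-skeleton expander. -/
def LinkUgrSkeletonExpander (dim : V → ℤ) (d : ℤ) (w : V → ℝ) (u : V) (α β : ℝ) : Prop :=
  ∀ A ⊆ facesAbove dim (dim u + 1) u,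
    wsum (linkWeight dim d w u)
        ((facesAbove dim (dim u + 2) u).filter fun e =>
          ∃ x ∈ A, ∃ y ∈ A, x ≠ y ∧ x ≤ e ∧ y ≤ e)
      ≤ α * wsum (linkWeight dim d w u) A + β * wsum (linkWeight dim d w u) A ^ 2

/-- `ugr(X, w)` is an `(α, β)`-skeleton expander. -/
def UgrSkeletonExpander (dim : V → ℤ) (w : V → ℝ) (α β : ℝ) : Prop :=
  ∀ A ⊆ faces dim 0,
    wsum w ((faces dim 1).filter fun e => ∃ x ∈ A, ∃ y ∈ A, x ≠ y ∧ x ≤ e ∧ y ≤ e)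
      ≤ α * wsum w A + β * wsum w A ^ 2

/-- `NI^{1,1,2}(X, w)` is an `(α, β)`-skeleton expander. -/
def NI112SkeletonExpander (dim : V → ℤ) (w : V → ℝ) (bot : V) (α β : ℝ) : Prop :=
  ∀ A ⊆ faces dim 1,
    wsum w ((faces dim 2).filter fun z =>
        ∃ x ∈ A, ∃ y ∈ A, x ≠ y ∧ x ≤ z ∧ y ≤ z ∧ ∀ t : V, t ≤ x → t ≤ y → t = bot)
      ≤ α * wsum w A + β * wsum w A ^ 2

/-- Pairs of an `i`-face and a `k`-face that are incident. -/
def incidentPairs (dim : V → ℤ) (i k : ℤ) : Finset (V × V) :=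
  Finset.univ.filter fun p => dim p.1 = i ∧ dim p.2 = k ∧ p.1 ≤ p.2

/-- `F^max_{i,j,k}(X)`. -/
def Fmax (dim : V → ℤ) (i j k : ℤ) : ℕ :=
  (incidentPairs dim i k).sup fun p => (facesBetween dim j p.1 p.2).card

/-- `F^min_{i,j,k}(X)`. -/
def Fmin (dim : V → ℤ) (i j k : ℤ) : ℕ :=
  if h : (incidentPairs dim i k).Nonempty then
    ((incidentPairs dim i k).image fun p => (facesBetween dim j p.1 p.2).card).min'
      (h.image _)
  else 0

end FK


set_option linter.unusedSectionVars false
set_option linter.unusedVariables false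
namespace FK

section Poset
variable {V : Type*} [Fintype V] [PartialOrder V]

lemma exists_between {dim : V → ℤ} {d : ℤ} {bot : V} (hP : IsDPoset dim d bot)
    (n : ℕ) : ∀ (x z : V), x ≤ z → dim x + n ≤ dim z → ∃ y, x ≤ y ∧ y ≤ z ∧ dim y = dim x + n := by
  induction n with
  | zero => intro x z h _; exact ⟨x, le_rfl, h, by simp⟩
  | succ n ih =>
    intro x z h hd
    obtain ⟨y, hxy, hyz, hy⟩ := ih x z h (by push_cast at hd; omega)
    have hlt : y < z := lt_of_le_of_ne hyz (by rintro rfl; push_cast at hd; omega)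
    obtain ⟨c, hc, hcz⟩ := exists_covBy_le_of_lt hlt
    refine ⟨c, hxy.trans hc.le, hcz, ?_⟩
    rw [hP.dim_covBy hc, hy]; push_cast; ring

lemma exists_between' {dim : V → ℤ} {d : ℤ} {bot : V} (hP : IsDPoset dim d bot)
    {x z : V} {j : ℤ} (h : x ≤ z) (h1 : dim x ≤ j) (h2 : j ≤ dim z) :
    ∃ y, x ≤ y ∧ y ≤ z ∧ dim y = j := by
  obtain ⟨y, a, b, c⟩ := exists_between hP (j - dim x).toNat x z h (by omega)
  exact ⟨y, a, b, by omega⟩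

lemma eq_of_le_dim {dim : V → ℤ} {d : ℤ} {bot : V} (hP : IsDPoset dim d bot)
    {x z : V} (h : x ≤ z) (h1 : dim x = dim z) : x = z := by
  by_contra hne
  have := hP.dim_strictMono (lt_of_le_of_ne h hne)
  omega

lemma dim_mono {dim : V → ℤ} {d : ℤ} {bot : V} (hP : IsDPoset dim d bot)
    {x z : V} (h : x ≤ z) : dim x ≤ dim z := by
  rcases h.eq_or_lt with rfl | h
  · rfl
  · exact (hP.dim_strictMono h).le

lemma covBy_of {dim : V → ℤ} {d : ℤ} {bot : V} (hP : IsDPoset dim d bot)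
    {x z : V} (h : x ≤ z) (h1 : dim z = dim x + 1) : x ⋖ z := by
  refine ⟨lt_of_le_of_ne h (by rintro rfl; omega), fun c h2 h3 => ?_⟩
  have := hP.dim_strictMono h2
  have := hP.dim_strictMono h3
  omega

lemma wsum_mono {w : V → ℝ} (hw : ∀ x, 0 ≤ w x) {A B : Finset V} (h : A ⊆ B) :
    wsum w A ≤ wsum w B :=
  Finset.sum_le_sum_of_subset_of_nonneg h fun x _ _ => hw x

lemma wsum_nonneg {w : V → ℝ} (hw : ∀ x, 0 ≤ w x) (A : Finset V) : 0 ≤ wsum w A :=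
  Finset.sum_nonneg fun x _ => hw x

lemma wsum_union_le {w : V → ℝ} (hw : ∀ x, 0 ≤ w x) (A B : Finset V) :
    wsum w (A ∪ B) ≤ wsum w A + wsum w B := by
  unfold wsum
  rw [← Finset.sum_union_inter]
  have := Finset.sum_nonneg (s := A ∩ B) (f := w) fun x _ => hw x
  linarith

lemma le_Fmax {dim : V → ℤ} {x z : V} (h : x ≤ z) (j : ℤ) :
    (facesBetween dim j x z).card ≤ Fmax dim (dim x) j (dim z) := by
  unfold Fmax
  exact Finset.le_sup (f := fun p : V × V => (facesBetween dim j p.1 p.2).card) (b := (x, z))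
    (by simp [incidentPairs, h])

lemma Fmin_le {dim : V → ℤ} {x z : V} (h : x ≤ z) (j : ℤ) :
    Fmin dim (dim x) j (dim z) ≤ (facesBetween dim j x z).card := by
  unfold Fmin
  have hm : (x, z) ∈ incidentPairs dim (dim x) (dim z) := by simp [incidentPairs, h]
  rw [dif_pos ⟨_, hm⟩]
  exact Finset.min'_le _ _ (Finset.mem_image_of_mem
    (fun p : V × V => (facesBetween dim j p.1 p.2).card) hm)

lemma Fmin_pos {dim : V → ℤ} {d : ℤ} {bot : V} (hP : IsDPoset dim d bot)
    {i j k : ℤ} (hij : i ≤ j) (hjk : j ≤ k) {x z : V} (h : x ≤ z) (hx : dim x = i)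
    (hz : dim z = k) : 1 ≤ Fmin dim i j k := by
  unfold Fmin
  have hm : (x, z) ∈ incidentPairs dim i k := by simp [incidentPairs, h, hx, hz]
  rw [dif_pos ⟨_, hm⟩]
  refine Finset.le_min' _ _ _ fun c hc => ?_
  obtain ⟨p, hp, rfl⟩ := Finset.mem_image.1 hc
  simp only [incidentPairs, Finset.mem_filter, Finset.mem_univ, true_and] at hp
  obtain ⟨y, a, b, c⟩ := exists_between' hP (j := j) hp.2.2 (by omega) (by omega)
  exact Finset.card_pos.2 ⟨y, by simp [facesBetween, a, b, c]⟩

lemma facesBelow_eq {dim : V → ℤ} {d : ℤ} {bot : V} (hP : IsDPoset dim d bot) (j : ℤ) (z : V) :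
    facesBelow dim j z = facesBetween dim j bot z := by
  ext y; simp [facesBelow, facesBetween, hP.bot_le y]

lemma double_count {S T : Finset V} (r : V → V → Prop) (φ : V → ℝ) (hφ : ∀ y, 0 ≤ φ y) (N : ℝ)
    (hN : ∀ y ∈ T, ((S.filter fun x => r x y).card : ℝ) ≤ N) :
    ∑ x ∈ S, wsum φ (T.filter fun y => r x y) ≤ N * wsum φ T := by
  unfold wsum
  simp_rw [Finset.sum_filter]
  rw [Finset.sum_comm, Finset.mul_sum]
  refine Finset.sum_le_sum fun y hy => ?_
  rw [← Finset.sum_filter, Finset.sum_const, nsmul_eq_mul]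
  exact mul_le_mul_of_nonneg_right (hN y hy) (hφ y)

lemma double_card (S T : Finset V) (r : V → V → Prop) :
    ∑ x ∈ S, ((T.filter fun y => r x y).card : ℝ) = ∑ y ∈ T, ((S.filter fun x => r x y).card : ℝ) := by
  simp_rw [Finset.card_filter, Nat.cast_sum]
  rw [Finset.sum_comm]

/-- counting of pairs under `z` -/
lemma pair_count {dim : V → ℤ} {d : ℤ} {bot : V} (hP : IsDPoset dim d bot) {i j : ℤ}
    (z : V) :
    ∑ x ∈ facesBelow dim i z, ((facesBetween dim j x z).card : ℝ) =
      ∑ y ∈ facesBelow dim j z, ((facesBelow dim i y).card : ℝ) := by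
  have h := double_card (facesBelow dim i z) (facesBelow dim j z) (fun x y => x ≤ y)
  have e1 : ∀ x, (facesBelow dim j z).filter (fun y => x ≤ y) = facesBetween dim j x z := by
    intro x; ext y; simp [facesBelow, facesBetween]; tauto
  have e2 : ∀ y ∈ facesBelow dim j z,
      (facesBelow dim i z).filter (fun x => x ≤ y) = facesBelow dim i y := by
    intro y hy; ext x
    simp only [facesBelow, Finset.mem_filter, Finset.mem_univ, true_and] at hy ⊢
    constructor
    · rintro ⟨⟨a, b⟩, c⟩; exact ⟨a, c⟩
    · rintro ⟨a, b⟩; exact ⟨⟨a, b.trans hy.2⟩, b⟩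
  simp_rw [e1] at h
  rw [h]
  exact Finset.sum_congr rfl fun y hy => by rw [e2 y hy]

lemma card_below_le {dim : V → ℤ} {d : ℤ} {bot : V} (hP : IsDPoset dim d bot) (hd : 2 ≤ d)
    {Fc : ℕ} (h02 : Fmax dim (-1) 0 2 ≤ Fc) (h12 : Fmax dim (-1) 1 2 ≤ Fc)
    {i : ℤ} {y : V} (hi : 0 ≤ i) (hiy : i < dim y) (hy : dim y ≤ 2) :
    (facesBelow dim i y).card ≤ Fc := by
  obtain ⟨z, hyz, hz⟩ := hP.pure y
  obtain ⟨t, hyt, -, ht⟩ := exists_between' hP (j := 2) hyz hy (by omega)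
  have h1 : (facesBelow dim i y).card ≤ (facesBetween dim i bot t).card := by
    apply Finset.card_le_card
    intro x
    simp only [facesBelow, facesBetween, Finset.mem_filter, Finset.mem_univ, true_and]
    rintro ⟨a, b⟩; exact ⟨a, hP.bot_le x, b.trans hyt⟩
  have h2 := le_Fmax (dim := dim) (hP.bot_le t) i
  rw [hP.dim_bot, ht] at h2
  have : i = 0 ∨ i = 1 := by omega
  rcases this with rfl | rfl <;> omega

lemma W_bounds {dim : V → ℤ} {d : ℤ} {w : V → ℝ} (hw : ∀ x, 0 ≤ w x) (y : V) (c : V → ℝ)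
    (m M : ℝ) (hm : 0 < m) (hM : ∀ z ∈ facesAbove dim d y, m ≤ c z ∧ c z ≤ M) :
    wsum w (facesAbove dim d y) / M ≤ ∑ z ∈ facesAbove dim d y, w z / c z ∧
    ∑ z ∈ facesAbove dim d y, w z / c z ≤ wsum w (facesAbove dim d y) / m := by
  unfold wsum
  rw [Finset.sum_div, Finset.sum_div]
  constructor
  · exact Finset.sum_le_sum fun z hz => div_le_div_of_nonneg_left (hw z)
      (hm.trans_le (hM z hz).1) (hM z hz).2
  · exact Finset.sum_le_sum fun z hz => div_le_div_of_nonneg_left (hw z) hm (hM z hz).1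

lemma W_pos {dim : V → ℤ} {d : ℤ} {bot : V} (hP : IsDPoset dim d bot) {w : V → ℝ}
    (hw : ∀ x, 0 < w x) (y : V) : 0 < wsum w (facesAbove dim d y) := by
  obtain ⟨z, hyz, hz⟩ := hP.pure y
  exact Finset.sum_pos (fun x _ => hw x) ⟨z, by simp [facesAbove, hyz, hz]⟩

lemma linkWeight_nonneg (dim : V → ℤ) (d : ℤ) {w : V → ℝ}
    (hw : ∀ x, 0 < w x) (x y : V) : 0 ≤ linkWeight dim d w x y := by
  unfold linkWeight
  refine mul_nonneg (inv_nonneg.2 (wsum_nonneg (fun x => (hw x).le) _)) ?_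
  exact Finset.sum_nonneg fun z _ => div_nonneg (hw z).le (Nat.cast_nonneg _)

lemma linkWeight_self {dim : V → ℤ} {d : ℤ} {bot : V} (hP : IsDPoset dim d bot) {w : V → ℝ}
    (hw : ∀ x, 0 < w x) (x : V) : linkWeight dim d w x x = 1 := by
  unfold linkWeight
  have : ∑ y ∈ facesAbove dim d x, w y / ((facesBetween dim (dim x) x y).card : ℝ)
      = wsum w (facesAbove dim d x) := by
    unfold wsum
    refine Finset.sum_congr rfl fun y hy => ?_
    simp only [facesAbove, Finset.mem_filter, Finset.mem_univ, true_and] at hy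
    have : facesBetween dim (dim x) x y = {x} := by
      ext t
      simp only [facesBetween, Finset.mem_filter, Finset.mem_univ, true_and, Finset.mem_singleton]
      constructor
      · rintro ⟨a, b, -⟩; exact (eq_of_le_dim hP b a.symm).symm
      · rintro rfl; exact ⟨rfl, le_rfl, hy.2⟩
    rw [this]; simp
  rw [this, inv_mul_cancel₀ (W_pos hP hw x).ne']

lemma sum_frac_le {w : V → ℝ} (hw : ∀ x, 0 ≤ w x) (S T : Finset V) (r : V → V → Prop) :
    ∑ y ∈ S, ∑ z ∈ T.filter (fun z => r y z), w z / ((S.filter fun y => r y z).card : ℝ)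
      ≤ wsum w T := by
  unfold wsum
  simp_rw [Finset.sum_filter]
  rw [Finset.sum_comm]
  refine Finset.sum_le_sum fun z hz => ?_
  rw [← Finset.sum_filter, Finset.sum_const, nsmul_eq_mul]
  rcases Nat.eq_zero_or_pos (S.filter fun y => r y z).card with h | h
  · rw [h]; simpa using hw z
  · have : ((S.filter fun y => r y z).card : ℝ) ≠ 0 := by positivity
    rw [mul_div_cancel₀ _ this]

lemma sum_linkWeight_le {dim : V → ℤ} {d : ℤ} {bot : V} (hP : IsDPoset dim d bot) {w : V → ℝ}
    (hw : ∀ x, 0 < w x) (j : ℤ) (x : V) :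
    wsum (linkWeight dim d w x) (facesAbove dim j x) ≤ 1 := by
  have h := sum_frac_le (fun x => (hw x).le) (facesAbove dim j x) (facesAbove dim d x)
    (fun y z => y ≤ z)
  have e : wsum (linkWeight dim d w x) (facesAbove dim j x) =
    (wsum w (facesAbove dim d x))⁻¹ * ∑ y ∈ facesAbove dim j x, ∑ z ∈ (facesAbove dim d x).filter (fun z => y ≤ z),
      w z / (((facesAbove dim j x).filter fun y => y ≤ z).card : ℝ) := by
    rw [Finset.mul_sum]
    unfold wsum linkWeight
    refine Finset.sum_congr rfl fun y hy => ?_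
    simp only [facesAbove, Finset.mem_filter, Finset.mem_univ, true_and] at hy
    congr 1
    refine Finset.sum_congr ?_ fun z hz => ?_
    · ext z
      simp only [facesAbove, Finset.mem_filter, Finset.mem_univ, true_and]
      constructor
      · rintro ⟨a, b⟩; exact ⟨⟨a, hy.2.trans b⟩, b⟩
      · rintro ⟨⟨a, -⟩, b⟩; exact ⟨a, b⟩
    · congr 3
      ext t
      simp only [facesAbove, facesBetween, Finset.mem_filter, Finset.mem_univ, true_and, hy.1]
      tauto
  rw [e, inv_mul_le_iff₀ (W_pos hP hw x)]
  linarith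

lemma sum_weight_le {dim : V → ℤ} {d : ℤ} {w : V → ℝ}
    (hw : IsProperWeight dim d w) (j : ℤ) :
    wsum w (faces dim j) ≤ 1 := by
  have h := sum_frac_le (fun x => (hw.pos x).le) (faces dim j) (faces dim d)
    (fun y z => y ≤ z)
  rw [hw.total] at h
  refine le_trans (le_of_eq ?_) h
  unfold wsum
  refine Finset.sum_congr rfl fun y hy => ?_
  simp only [faces, Finset.mem_filter, Finset.mem_univ, true_and] at hy
  rw [hw.eq y]
  refine Finset.sum_congr ?_ fun z hz => ?_
  · ext z
    simp only [facesAbove, faces, Finset.mem_filter, Finset.mem_univ, true_and]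
  · congr 3
    ext t
    simp only [faces, facesBelow, Finset.mem_filter, Finset.mem_univ, true_and, hy]

set_option maxHeartbeats 2000000 in
lemma weight_compare {dim : V → ℤ} {d : ℤ} {bot : V} (hP : IsDPoset dim d bot) (hd : 2 ≤ d)
    {Fc : ℕ} (h02 : Fmax dim (-1) 0 2 ≤ Fc) (h12 : Fmax dim (-1) 1 2 ≤ Fc)
    {L : ℝ} (hL : 1 ≤ L)
    (hLow : ∀ i j k : ℤ, -1 ≤ i → i ≤ j → j ≤ k → k ≤ d →
          (Fmax dim i j k : ℝ) ≤ L * (Fmin dim i j k : ℝ))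
    {w : V → ℝ} (hw : IsProperWeight dim d w) {N : ℝ} (hN1 : 1 ≤ N) (hN : (Fc : ℝ) ≤ N)
    {x y : V} (hx : 0 ≤ dim x) (hxy : x ≤ y) (hlt : dim x < dim y) (hy : dim y ≤ 2) :
    w y ≤ (L ^ 3 * N) * (w x * linkWeight dim d w x y) ∧
    w x * linkWeight dim d w x y ≤ (L ^ 3 * N) * w y := by
  obtain ⟨z, hyz, hz⟩ := hP.pure y
  set i := dim x with hi
  set j := dim y with hj
  obtain ⟨mi, hmi⟩ : ∃ m : ℝ, m = (Fmin dim (-1) i d : ℝ) := ⟨_, rfl⟩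
  obtain ⟨Mi, hMi⟩ : ∃ m : ℝ, m = (Fmax dim (-1) i d : ℝ) := ⟨_, rfl⟩
  obtain ⟨mj, hmj⟩ : ∃ m : ℝ, m = (Fmin dim (-1) j d : ℝ) := ⟨_, rfl⟩
  obtain ⟨Mj, hMj⟩ : ∃ m : ℝ, m = (Fmax dim (-1) j d : ℝ) := ⟨_, rfl⟩
  obtain ⟨m, hm⟩ : ∃ m : ℝ, m = (Fmin dim i j d : ℝ) := ⟨_, rfl⟩
  obtain ⟨M, hM⟩ : ∃ m : ℝ, m = (Fmax dim i j d : ℝ) := ⟨_, rfl⟩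
  have hLi : Mi ≤ L * mi := by rw [hMi, hmi]; exact hLow _ _ _ (by omega) (by omega) (by omega) le_rfl
  have hLj : Mj ≤ L * mj := by rw [hMj, hmj]; exact hLow _ _ _ (by omega) (by omega) (by omega) le_rfl
  have hLm : M ≤ L * m := by rw [hM, hm]; exact hLow _ _ _ (by omega) (by omega) (by omega) le_rfl
  have pmi : 1 ≤ mi := by
    rw [hmi]; exact_mod_cast Fmin_pos hP (by omega) (by omega) (hP.bot_le z) hP.dim_bot hz
  have pmj : 1 ≤ mj := by
    rw [hmj]; exact_mod_cast Fmin_pos hP (by omega) (by omega) (hP.bot_le z) hP.dim_bot hz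
  have pm : 1 ≤ m := by
    rw [hm]; exact_mod_cast Fmin_pos hP (by omega) (by omega) (hxy.trans hyz) rfl hz
  -- bounds on cardinalities
  have bi : ∀ z, dim z = d → ∀ k : ℤ, (Fmin dim (-1) k d : ℝ) ≤ ((facesBelow dim k z).card : ℝ) ∧
      ((facesBelow dim k z).card : ℝ) ≤ (Fmax dim (-1) k d : ℝ) := by
    intro z hz k
    have a := le_Fmax (dim := dim) (hP.bot_le z) k
    have b := Fmin_le (dim := dim) (hP.bot_le z) k
    rw [hP.dim_bot, hz] at a b
    rw [facesBelow_eq hP]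
    exact ⟨by exact_mod_cast b, by exact_mod_cast a⟩
  have bm : ∀ x' z, dim z = d → dim x' = i → x' ≤ z → m ≤ ((facesBetween dim j x' z).card : ℝ) ∧
      ((facesBetween dim j x' z).card : ℝ) ≤ M := by
    intro x' z hz hx' h
    have a := le_Fmax (dim := dim) h j
    have b := Fmin_le (dim := dim) h j
    rw [hx', hz] at a b
    rw [hm, hM]
    exact ⟨by exact_mod_cast b, by exact_mod_cast a⟩
  -- pair counting
  have pc := pair_count hP (i := i) (j := j) z
  have c1 : mi * m ≤ Mj * N := by
    calc mi * m ≤ ((facesBelow dim i z).card : ℝ) * m := by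
          have := (bi z hz i).1; rw [← hmi] at this; gcongr
      _ = ∑ x ∈ facesBelow dim i z, m := by simp
      _ ≤ ∑ x ∈ facesBelow dim i z, ((facesBetween dim j x z).card : ℝ) := by
          refine Finset.sum_le_sum fun x' hx' => ?_
          simp only [facesBelow, Finset.mem_filter, Finset.mem_univ, true_and] at hx'
          exact (bm x' z hz hx'.1 hx'.2).1
      _ = ∑ y ∈ facesBelow dim j z, ((facesBelow dim i y).card : ℝ) := pc
      _ ≤ ∑ y ∈ facesBelow dim j z, N := by
          refine Finset.sum_le_sum fun y' hy' => ?_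
          simp only [facesBelow, Finset.mem_filter, Finset.mem_univ, true_and] at hy'
          refine le_trans ?_ hN
          exact_mod_cast card_below_le hP hd h02 h12 hx (by omega) (by omega)
      _ = ((facesBelow dim j z).card : ℝ) * N := by simp
      _ ≤ Mj * N := by
          have := (bi z hz j).2; rw [← hMj] at this; gcongr
  have c2 : mj ≤ Mi * M := by
    calc mj ≤ ((facesBelow dim j z).card : ℝ) := by
          have := (bi z hz j).1; rwa [← hmj] at this
      _ = ∑ y ∈ facesBelow dim j z, (1 : ℝ) := by simp
      _ ≤ ∑ y ∈ facesBelow dim j z, ((facesBelow dim i y).card : ℝ) := by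
          refine Finset.sum_le_sum fun y' hy' => ?_
          simp only [facesBelow, Finset.mem_filter, Finset.mem_univ, true_and] at hy'
          obtain ⟨t, -, ht, ht'⟩ := exists_between' hP (j := i) (hP.bot_le y')
            (by have := hP.dim_bot; omega) (by omega)
          exact_mod_cast Finset.card_pos.2 ⟨t, by simp [facesBelow, ht, ht']⟩
      _ = ∑ x ∈ facesBelow dim i z, ((facesBetween dim j x z).card : ℝ) := pc.symm
      _ ≤ ∑ x ∈ facesBelow dim i z, M := by
          refine Finset.sum_le_sum fun x' hx' => ?_
          simp only [facesBelow, Finset.mem_filter, Finset.mem_univ, true_and] at hx'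
          exact (bm x' z hz hx'.1 hx'.2).2
      _ = ((facesBelow dim i z).card : ℝ) * M := by simp
      _ ≤ Mi * M := by
          have := (bi z hz i).2; rw [← hMi] at this
          have : 0 ≤ M := by rw [hM]; positivity
          gcongr
  -- weights
  have hw0 : ∀ x, 0 ≤ w x := fun x => (hw.pos x).le
  have Wx := W_pos hP hw.pos x
  have Wy := W_pos hP hw.pos y
  have hwx := W_bounds (dim := dim) (d := d) hw0 x (fun z => ((facesBelow dim i z).card : ℝ)) mi Mi (by linarith)
    (fun z hz => by
      simp only [facesAbove, Finset.mem_filter, Finset.mem_univ, true_and] at hz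
      rw [hmi, hMi]; exact bi z hz.1 i)
  have hwy := W_bounds (dim := dim) (d := d) hw0 y (fun z => ((facesBelow dim j z).card : ℝ)) mj Mj (by linarith)
    (fun z hz => by
      simp only [facesAbove, Finset.mem_filter, Finset.mem_univ, true_and] at hz
      rw [hmj, hMj]; exact bi z hz.1 j)
  have hwxy := W_bounds (dim := dim) (d := d) hw0 y (fun z => ((facesBetween dim j x z).card : ℝ)) m M (by linarith)
    (fun z hz => by
      simp only [facesAbove, Finset.mem_filter, Finset.mem_univ, true_and] at hz
      exact bm x z hz.1 rfl (hxy.trans hz.2))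
  rw [← hw.eq x] at hwx
  rw [← hw.eq y] at hwy
  have hlw : linkWeight dim d w x y = (wsum w (facesAbove dim d x))⁻¹ *
    ∑ z ∈ facesAbove dim d y, w z / ((facesBetween dim j x z).card : ℝ) := rfl
  rw [hlw]
  clear hlw
  generalize wsum w (facesAbove dim d x) = P at *
  generalize wsum w (facesAbove dim d y) = Q at *
  generalize ∑ z ∈ facesAbove dim d y, w z / ((facesBetween dim j x z).card : ℝ) = S at *
  have hMi0 : 0 < Mi := by
    by_contra h
    push Not at h
    have : 0 ≤ M := by rw [hM]; positivity
    nlinarith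
  have hM0 : 0 < M := by
    by_contra h
    push Not at h
    nlinarith
  have hMj0 : 0 < Mj := by
    by_contra h
    push Not at h
    nlinarith [mul_pos (lt_of_lt_of_le one_pos pmi) (lt_of_lt_of_le one_pos pm)]
  have hmi0 : 0 < mi := by linarith
  have hmj0 : 0 < mj := by linarith
  have hm0 : 0 < m := by linarith
  have hL0 : 0 < L := by linarith
  have hN0 : 0 < N := by linarith
  have hS0 : 0 ≤ S := le_trans (by positivity) hwxy.1
  have up : w x * (P⁻¹ * S) ≤ Q / (mi * m) := by
    calc w x * (P⁻¹ * S) ≤ (P / mi) * (P⁻¹ * (Q / m)) := by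
          have := hwx.2; have := hwxy.2
          gcongr
      _ = Q / (mi * m) := by field_simp
  have lo : Q / (Mi * M) ≤ w x * (P⁻¹ * S) := by
    calc Q / (Mi * M) = (P / Mi) * (P⁻¹ * (Q / M)) := by field_simp
      _ ≤ w x * (P⁻¹ * S) := by
          have := hwx.1; have := hwxy.1
          have := hw0 x
          gcongr
  have hMM : Mi * M ≤ L ^ 2 * (mi * m) := by
    calc Mi * M ≤ (L * mi) * (L * m) := by gcongr
      _ = _ := by ring
  constructor
  · calc w y ≤ Q / mj := hwy.2
      _ ≤ (L ^ 3 * N) * (Q / (Mi * M)) := by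
          rw [div_le_iff₀ hmj0, mul_div_assoc', div_mul_eq_mul_div, le_div_iff₀ (by positivity)]
          have : Mi * M ≤ L ^ 3 * N * mj := by
            calc Mi * M ≤ L ^ 2 * (mi * m) := hMM
              _ ≤ L ^ 2 * (Mj * N) := by gcongr
              _ ≤ L ^ 2 * ((L * mj) * N) := by gcongr
              _ = _ := by ring
          nlinarith
      _ ≤ _ := by gcongr
  · calc w x * (P⁻¹ * S) ≤ Q / (mi * m) := up
      _ ≤ (L ^ 3 * N) * (Q / Mj) := by
          rw [div_le_iff₀ (by positivity), mul_div_assoc', div_mul_eq_mul_div, le_div_iff₀ (by positivity)]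
          have : Mj ≤ L ^ 3 * N * (mi * m) := by
            calc Mj ≤ L * mj := hLj
              _ ≤ L * (Mi * M) := by gcongr
              _ ≤ L * (L ^ 2 * (mi * m)) := by gcongr
              _ = L ^ 3 * 1 * (mi * m) := by ring
              _ ≤ _ := by gcongr
          nlinarith
      _ ≤ _ := by have := hwy.1; gcongr

end Poset
end FK

set_option linter.unusedSectionVars false
set_option linter.unusedVariables false
namespace FK

section Core
variable {V : Type*} [Fintype V] [PartialOrder V]

lemma wsum_le_of_cover {w : V → ℝ} (hw : ∀ x, 0 ≤ w x) {S T : Finset V} (G : V → Finset V)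
    (h : ∀ t ∈ T, ∃ u ∈ S, t ∈ G u) : wsum w T ≤ ∑ u ∈ S, wsum w (G u) := by
  have h1 : wsum w T ≤ ∑ t ∈ T, ∑ u ∈ S, if t ∈ G u then w t else 0 := by
    refine Finset.sum_le_sum fun t ht => ?_
    obtain ⟨u, hu, htu⟩ := h t ht
    have := Finset.single_le_sum (f := fun u => if t ∈ G u then w t else 0)
      (fun u _ => by split_ifs <;> simp [hw]) hu
    simpa [htu] using this
  refine h1.trans ?_
  rw [Finset.sum_comm]
  refine Finset.sum_le_sum fun u hu => ?_
  rw [← Finset.sum_filter]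
  exact Finset.sum_le_sum_of_subset_of_nonneg (fun t ht => (Finset.mem_filter.1 ht).2)
    fun x _ _ => hw x

/-- Comparison of weights with link weights. -/
def Cmp (dim : V → ℤ) (d : ℤ) (w : V → ℝ) (C : ℝ) : Prop :=
  ∀ x y, 0 ≤ dim x → x ≤ y → dim x < dim y → dim y ≤ 2 →
    w y ≤ C * (w x * linkWeight dim d w x y) ∧ w x * linkWeight dim d w x y ≤ C * w y

lemma cmp_sum {dim : V → ℤ} {d : ℤ} {w : V → ℝ} {C : ℝ} (hc : Cmp dim d w C)
    {j : ℤ} {v : V} {S : Finset V} (hv : 0 ≤ dim v) (hvj : dim v < j) (hj : j ≤ 2)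
    (hS : S ⊆ facesAbove dim j v) :
    wsum w S ≤ C * (w v * wsum (linkWeight dim d w v) S) ∧
    w v * wsum (linkWeight dim d w v) S ≤ C * wsum w S := by
  have h : ∀ y ∈ S, w y ≤ C * (w v * linkWeight dim d w v y) ∧
      w v * linkWeight dim d w v y ≤ C * w y := by
    intro y hy
    have := hS hy
    simp only [facesAbove, Finset.mem_filter, Finset.mem_univ, true_and] at this
    exact hc v y hv this.2 (by omega) (by omega)
  unfold wsum
  rw [Finset.mul_sum, Finset.mul_sum, Finset.mul_sum]
  exact ⟨Finset.sum_le_sum fun y hy => (h y hy).1, Finset.sum_le_sum fun y hy => (h y hy).2⟩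

lemma common_vertex {dim : V → ℤ} {d : ℤ} {bot : V} (hP : IsDPoset dim d bot) {x y : V}
    (h : ¬ ∀ t : V, t ≤ x → t ≤ y → t = bot) : ∃ u, dim u = 0 ∧ u ≤ x ∧ u ≤ y := by
  push Not at h
  obtain ⟨s, h1, h2, h3⟩ := h
  have hlt : bot < s := lt_of_le_of_ne (hP.bot_le s) (Ne.symm h3)
  have := hP.dim_strictMono hlt
  have hb := hP.dim_bot
  obtain ⟨u, -, hu, hd⟩ := exists_between' hP (j := 0) hlt.le (by omega) (by omega)
  exact ⟨u, hd, hu.trans h1, hu.trans h2⟩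

set_option maxHeartbeats 1000000 in
lemma core {dim : V → ℤ} {d : ℤ} {bot : V} (hP : IsDPoset dim d bot) {w : V → ℝ}
    (hw : ∀ x, 0 < w x) {C N : ℝ} (hC : 1 ≤ C) (hN : 1 ≤ N) (hcmp : Cmp dim d w C)
    (hcard : ∀ (i : ℤ) (y : V), 0 ≤ i → i < dim y → dim y ≤ 2 →
      ((facesBelow dim i y).card : ℝ) ≤ N)
    {ε' : ℝ} (hε : 0 < ε') {α0 β0 αm1 αpar βpar βm1 : ℝ}
    (ha0 : 0 ≤ α0) (hb0 : 0 ≤ β0) (ham : 0 ≤ αm1) (hap : 0 ≤ αpar) (hbp : 0 ≤ βpar)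
    (hbm : 0 < βm1)
    (h2a : ∀ v : V, dim v = 0 → LinkUgrSkeletonExpander dim d w v α0 β0)
    (h2b : UgrSkeletonExpander dim w αm1 βm1)
    (h2c : NI112SkeletonExpander dim w bot αpar βpar)
    {hm1 h0 hpar E' : ℝ} (hhm : 0 < hm1) (hh0 : 0 < h0) (hhp : 0 < hpar)
    (hsum : (α0 + β0 * h0) + (αpar + βpar * hpar) + (αm1 + βm1 * hm1) / h0 ≤ E' * ε')
    (hE0 : 0 < E') (hE : E' * (8 * C ^ 4 * N * (1 + 2 * C ^ 2 * N)) ≤ 1)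
    {A : Finset V} (hA : A ⊆ faces dim 1)
    (hA1 : C * N * wsum w A ≤ h0 * hm1) (hA2 : wsum w A ≤ hpar)
    (P1 : ∀ e ∈ A, ε' ≤ wsum (linkWeight dim d w e)
      ((facesAbove dim 2 e).filter fun t => ∃ e' ∈ A, e' ≠ e ∧ e' ≤ t))
    (P2 : ∀ v, dim v = 0 → h0 < wsum (linkWeight dim d w v) (A.filter fun e => v ≤ e) →
      ε' * wsum (linkWeight dim d w v) (A.filter fun e => v ≤ e) ≤
        2 * C ^ 2 * wsum (linkWeight dim d w v) ((facesAbove dim 2 v).filter fun t =>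
          ∃ e ∈ A, v ≤ e ∧ e ≤ t ∧ ∃ e' ∈ A, ¬ v ≤ e' ∧ e' ≤ t)) :
    A = ∅ := by
  have hw0 : ∀ x, 0 ≤ w x := fun x => (hw x).le
  have hl0 : ∀ v x, 0 ≤ linkWeight dim d w v x := linkWeight_nonneg dim d hw
  have hdA : ∀ e ∈ A, dim e = 1 := fun e he => by simpa [faces] using hA he
  have hC0 : 0 < C := by linarith
  have hN0 : 0 < N := by linarith
  set a := wsum w A with ha
  have ha_nn : 0 ≤ a := wsum_nonneg hw0 A
  let Av : V → Finset V := fun v => A.filter fun e => v ≤ e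
  have hAv : ∀ v, Av v ⊆ facesAbove dim 1 v := by
    intro v e he
    simp only [Av, Finset.mem_filter] at he
    simp [facesAbove, he.2, hdA e he.1]
  let lA : V → ℝ := fun v => wsum (linkWeight dim d w v) (Av v)
  have hlA0 : ∀ v, 0 ≤ lA v := fun v => wsum_nonneg (hl0 v) _
  -- three pieces of the sum bound
  have q1 : α0 + β0 * h0 ≤ E' * ε' := by
    have : 0 ≤ αpar + βpar * hpar := by positivity
    have : 0 ≤ (αm1 + βm1 * hm1) / h0 := by positivity
    linarith
  have q2 : αpar + βpar * hpar ≤ E' * ε' := by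
    have : 0 ≤ α0 + β0 * h0 := by positivity
    have : 0 ≤ (αm1 + βm1 * hm1) / h0 := by positivity
    linarith
  have q3 : (αm1 + βm1 * hm1) / h0 ≤ E' * ε' := by
    have : 0 ≤ α0 + β0 * h0 := by positivity
    have : 0 ≤ αpar + βpar * hpar := by positivity
    linarith
  set k := E' * ε' with hk
  have hk0 : 0 < k := by positivity
  -- sums over vertices
  have sA : ∑ v ∈ faces dim 0, wsum w (Av v) ≤ N * a := by
    refine double_count (fun v e => v ≤ e) w hw0 N fun e he => ?_
    have : (faces dim 0).filter (fun v => v ≤ e) = facesBelow dim 0 e := by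
      ext v; simp [faces, facesBelow]
    rw [this]
    exact hcard 0 e le_rfl (by rw [hdA e he]; norm_num) (by rw [hdA e he]; norm_num)
  have sL : ∀ S ⊆ faces dim 0, ∑ v ∈ S, w v * lA v ≤ C * N * a := by
    intro S hS
    calc ∑ v ∈ S, w v * lA v ≤ ∑ v ∈ faces dim 0, w v * lA v :=
          Finset.sum_le_sum_of_subset_of_nonneg hS fun v _ _ => mul_nonneg (hw0 v) (hlA0 v)
      _ ≤ ∑ v ∈ faces dim 0, C * wsum w (Av v) := by
          refine Finset.sum_le_sum fun v hv => ?_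
          have hv : dim v = 0 := by simpa [faces] using hv
          exact (cmp_sum hcmp (by omega) (by omega) (by norm_num) (hAv v)).2
      _ ≤ C * N * a := by
          rw [← Finset.mul_sum, mul_assoc]; gcongr
  -- heavy and light
  let H : Finset V := (faces dim 0).filter fun v => h0 < lA v
  let Li : Finset V := (faces dim 0).filter fun v => ¬ h0 < lA v
  have hH : H ⊆ faces dim 0 := Finset.filter_subset _ _
  have hLi : Li ⊆ faces dim 0 := Finset.filter_subset _ _
  have hdH : ∀ v ∈ H, dim v = 0 := fun v hv => by simpa [faces] using hH hv
  have hdLi : ∀ v ∈ Li, dim v = 0 := fun v hv => by simpa [faces] using hLi hv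
  have wH : wsum w H * h0 ≤ C * N * a := by
    refine le_trans ?_ (sL H hH)
    unfold wsum
    rw [Finset.sum_mul]
    refine Finset.sum_le_sum fun v hv => ?_
    have := (Finset.mem_filter.1 hv).2
    exact mul_le_mul_of_nonneg_left this.le (hw0 v)
  have wH0 : 0 ≤ wsum w H := wsum_nonneg hw0 H
  let E2H : Finset V := (faces dim 1).filter fun e => ∃ x ∈ H, ∃ y ∈ H, x ≠ y ∧ x ≤ e ∧ y ≤ e
  have wE2H : wsum w E2H ≤ k * (C * N * a) := by
    have h1 := h2b H hH
    have h2 : wsum w H ≤ hm1 := by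
      have : wsum w H * h0 ≤ hm1 * h0 := by linarith
      exact le_of_mul_le_mul_right this hh0
    have h3 : wsum w H ≤ (C * N * a) / h0 := by rwa [le_div_iff₀ hh0]
    calc wsum w E2H ≤ αm1 * wsum w H + βm1 * wsum w H ^ 2 := h1
      _ = (αm1 + βm1 * wsum w H) * wsum w H := by ring
      _ ≤ (αm1 + βm1 * hm1) * ((C * N * a) / h0) := by gcongr
      _ = ((αm1 + βm1 * hm1) / h0) * (C * N * a) := by ring
      _ ≤ _ := by gcongr
  let TNI : Finset V := (faces dim 2).filter fun z =>
        ∃ x ∈ A, ∃ y ∈ A, x ≠ y ∧ x ≤ z ∧ y ≤ z ∧ ∀ t : V, t ≤ x → t ≤ y → t = bot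
  have wTNI : wsum w TNI ≤ k * a := by
    calc wsum w TNI ≤ αpar * a + βpar * a ^ 2 := h2c A hA
      _ = (αpar + βpar * a) * a := by ring
      _ ≤ (αpar + βpar * hpar) * a := by gcongr
      _ ≤ _ := by gcongr
  let G : V → Finset V := fun u => (facesAbove dim 2 u).filter fun e =>
          ∃ x ∈ Av u, ∃ y ∈ Av u, x ≠ y ∧ x ≤ e ∧ y ≤ e
  let TL : Finset V := (faces dim 2).filter fun t => ∃ u ∈ Li, t ∈ G u
  have wTL : wsum w TL ≤ k * (C ^ 2 * N * a) := by
    calc wsum w TL ≤ ∑ u ∈ Li, wsum w (G u) :=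
          wsum_le_of_cover hw0 G fun t ht => (Finset.mem_filter.1 ht).2
      _ ≤ ∑ u ∈ Li, C * (k * (w u * lA u)) := by
          refine Finset.sum_le_sum fun u hu => ?_
          have hu0 := hdLi u hu
          have h1 := h2a u hu0 (Av u) (by rw [hu0]; exact hAv u)
          rw [hu0] at h1
          norm_num at h1
          have h2 := (cmp_sum hcmp (v := u) (j := 2) (S := G u) (by omega) (by omega) le_rfl
            (Finset.filter_subset _ _)).1
          have h3 : lA u ≤ h0 := not_lt.1 (Finset.mem_filter.1 hu).2
          have h4 : wsum (linkWeight dim d w u) (G u) ≤ k * lA u := by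
            calc wsum (linkWeight dim d w u) (G u) ≤ α0 * lA u + β0 * lA u ^ 2 := h1
              _ = (α0 + β0 * lA u) * lA u := by ring
              _ ≤ (α0 + β0 * h0) * lA u := by
                  have := hlA0 u
                  gcongr
              _ ≤ _ := by
                  have := hlA0 u
                  gcongr
          calc wsum w (G u) ≤ C * (w u * wsum (linkWeight dim d w u) (G u)) := h2
            _ ≤ C * (w u * (k * lA u)) := by have := hw0 u; gcongr
            _ = _ := by ring
      _ = C * (k * ∑ u ∈ Li, w u * lA u) := by rw [Finset.mul_sum, Finset.mul_sum]
      _ ≤ C * (k * (C * N * a)) := by have := sL Li hLi; gcongr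
      _ = _ := by ring
  let TH : Finset V := (faces dim 2).filter fun t => ∃ e ∈ E2H, t ∈ facesAbove dim 2 e
  have wTH : wsum w TH ≤ k * (C ^ 2 * N * a) := by
    calc wsum w TH ≤ ∑ e ∈ E2H, wsum w (facesAbove dim 2 e) :=
          wsum_le_of_cover hw0 _ fun t ht => (Finset.mem_filter.1 ht).2
      _ ≤ ∑ e ∈ E2H, C * w e := by
          refine Finset.sum_le_sum fun e he => ?_
          have he1 : dim e = 1 := by simpa [faces] using (Finset.mem_filter.1 he).1
          have h2 := (cmp_sum hcmp (v := e) (j := 2) (by omega) (by omega) le_rfl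
            (Finset.Subset.refl _)).1
          have h3 := sum_linkWeight_le hP hw 2 e
          refine h2.trans ?_
          have := hw0 e
          calc _ ≤ C * (w e * 1) := by gcongr
            _ = _ := by ring
      _ = C * wsum w E2H := by rw [← Finset.mul_sum]; rfl
      _ ≤ C * (k * (C * N * a)) := by gcongr
      _ = _ := by ring
  -- trichotomy
  have tri : ∀ t ∈ faces dim 2, ∀ e ∈ A, ∀ e' ∈ A, e ≠ e' → e ≤ t → e' ≤ t →
      t ∈ TNI ∨ ∃ u, dim u = 0 ∧ u ≤ e ∧ u ≤ e' := by
    intro t ht e he e' he' hne h1 h2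
    by_cases h : ∀ s : V, s ≤ e → s ≤ e' → s = bot
    · left
      exact Finset.mem_filter.2 ⟨ht, e, he, e', he', hne, h1, h2, h⟩
    · exact Or.inr (common_vertex hP h)
  have inTL : ∀ t ∈ faces dim 2, ∀ e ∈ A, ∀ e' ∈ A, e ≠ e' → e ≤ t → e' ≤ t →
      ∀ u ∈ Li, u ≤ e → u ≤ e' → t ∈ TL := by
    intro t ht e he e' he' hne h1 h2 u hu h3 h4
    have ht2 : dim t = 2 := by simpa [faces] using ht
    refine Finset.mem_filter.2 ⟨ht, u, hu, Finset.mem_filter.2 ⟨?_, e, ?_, e', ?_, hne, h1, h2⟩⟩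
    · simp [facesAbove, ht2, h3.trans h1]
    · simp [Av, he, h3]
    · simp [Av, he', h4]
  have HorL : ∀ u, dim u = 0 → u ∈ H ∨ u ∈ Li := by
    intro u hu
    by_cases h : h0 < lA u
    · left; simp [H, faces, hu, h]
    · right; simp only [Li, faces, Finset.mem_filter, Finset.mem_univ, true_and]; exact ⟨hu, h⟩
  -- heavy edges
  let D : V → V → Prop := fun v t => v ≤ t ∧ ∃ e ∈ A, v ≤ e ∧ e ≤ t ∧ ∃ e' ∈ A, ¬ v ≤ e' ∧ e' ≤ t
  let T1 : Finset V := TNI ∪ TL ∪ TH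
  have hT1 : ∀ v ∈ H, ((facesAbove dim 2 v).filter fun t =>
          ∃ e ∈ A, v ≤ e ∧ e ≤ t ∧ ∃ e' ∈ A, ¬ v ≤ e' ∧ e' ≤ t) ⊆ T1.filter (fun t => v ≤ t) := by
    intro v hv t ht
    simp only [Finset.mem_filter] at ht
    obtain ⟨ht, e, he, hve, het, e', he', hve', het'⟩ := ht
    simp only [facesAbove, Finset.mem_filter, Finset.mem_univ, true_and] at ht
    refine Finset.mem_filter.2 ⟨?_, ht.2⟩
    have ht2 : t ∈ faces dim 2 := by simp [faces, ht.1]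
    have hne : e ≠ e' := by rintro rfl; exact hve' hve
    rcases tri t ht2 e he e' he' hne het het' with h | ⟨u, hu, hue, hue'⟩
    · simp [T1, h]
    · rcases HorL u hu with hu' | hu'
      · have : t ∈ TH := by
          refine Finset.mem_filter.2 ⟨ht2, e, Finset.mem_filter.2 ⟨hA he, v, hv, u, hu', ?_, hve, hue⟩, ?_⟩
          · rintro rfl; exact hve' hue'
          · simp [facesAbove, ht.1, het]
        simp [T1, this]
      · have := inTL t ht2 e he e' he' hne het het' u hu' hue hue'
        simp [T1, this]
  have hT1d : ∀ t ∈ T1, dim t = 2 := by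
    intro t ht
    simp only [T1, TNI, TL, TH, Finset.mem_union, Finset.mem_filter, faces, Finset.mem_univ,
      true_and] at ht
    tauto
  have wT1 : wsum w T1 ≤ k * a * (1 + 2 * C ^ 2 * N) := by
    have h1 := wsum_union_le hw0 (TNI ∪ TL) TH
    have h2 := wsum_union_le hw0 TNI TL
    calc wsum w T1 ≤ k * a + k * (C ^ 2 * N * a) + k * (C ^ 2 * N * a) := by linarith
      _ = _ := by ring
  let AH : Finset V := A.filter fun e => ∃ v ∈ H, e ∈ Av v
  have wAH : ε' * wsum w AH ≤ 2 * C ^ 4 * (N * (k * a * (1 + 2 * C ^ 2 * N))) := by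
    have s1 : wsum w AH ≤ ∑ v ∈ H, wsum w (Av v) :=
      wsum_le_of_cover hw0 Av fun e he => (Finset.mem_filter.1 he).2
    have s2 : ∀ v ∈ H, ε' * wsum w (Av v) ≤ 2 * C ^ 4 * wsum w (T1.filter (fun t => v ≤ t)) := by
      intro v hv
      have hv0 := hdH v hv
      have h1 := (cmp_sum hcmp (v := v) (j := 1) (by omega) (by omega) (by norm_num) (hAv v)).1
      have h2 := P2 v hv0 (Finset.mem_filter.1 hv).2
      have h3 := wsum_mono (hl0 v) (hT1 v hv)
      have h4 := (cmp_sum hcmp (v := v) (j := 2) (S := T1.filter (fun t => v ≤ t)) (by omega) (by omega) le_rfl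
        (by
          intro t ht
          have := Finset.mem_filter.1 ht
          simp [facesAbove, this.2, hT1d t this.1])).2
      have hwv := hw0 v
      calc ε' * wsum w (Av v) ≤ ε' * (C * (w v * lA v)) := by gcongr
        _ = C * w v * (ε' * lA v) := by ring
        _ ≤ C * w v * (2 * C ^ 2 * wsum (linkWeight dim d w v) (T1.filter (fun t => v ≤ t))) := by
            refine mul_le_mul_of_nonneg_left (h2.trans ?_) (by positivity)
            gcongr
        _ = 2 * C ^ 3 * (w v * wsum (linkWeight dim d w v) (T1.filter (fun t => v ≤ t))) := by ring
        _ ≤ 2 * C ^ 3 * (C * wsum w (T1.filter (fun t => v ≤ t))) := by gcongr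
        _ = _ := by ring
    have s3 : ∑ v ∈ H, wsum w (T1.filter (fun t => v ≤ t)) ≤ N * wsum w T1 := by
      refine double_count (fun v e => v ≤ e) w hw0 N fun t ht => ?_
      have ht2 := hT1d t ht
      refine le_trans ?_ (hcard 0 t le_rfl (by omega) (by omega))
      refine Nat.cast_le.2 (Finset.card_le_card fun v hv => ?_)
      have := Finset.mem_filter.1 hv
      simp [facesBelow, this.2, hdH v this.1]
    calc ε' * wsum w AH ≤ ε' * ∑ v ∈ H, wsum w (Av v) := by gcongr
      _ = ∑ v ∈ H, ε' * wsum w (Av v) := by rw [Finset.mul_sum]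
      _ ≤ ∑ v ∈ H, 2 * C ^ 4 * wsum w (T1.filter (fun t => v ≤ t)) := Finset.sum_le_sum s2
      _ = 2 * C ^ 4 * ∑ v ∈ H, wsum w (T1.filter (fun t => v ≤ t)) := by rw [Finset.mul_sum]
      _ ≤ 2 * C ^ 4 * (N * (k * a * (1 + 2 * C ^ 2 * N))) := by
          refine mul_le_mul_of_nonneg_left (s3.trans ?_) (by positivity)
          gcongr
  -- light edges
  let AL : Finset V := A.filter fun e => ¬ ∃ v ∈ H, e ∈ Av v
  have wAL : ε' * wsum w AL ≤ C * (N * (k * a * (1 + 2 * C ^ 2 * N))) := by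
    have s2 : ∀ e ∈ AL, ε' * w e ≤ C * wsum w (T1.filter (fun t => e ≤ t)) := by
      intro e heL
      obtain ⟨he, hnH⟩ := Finset.mem_filter.1 heL
      have he1 := hdA e he
      have hsub : ((facesAbove dim 2 e).filter fun t => ∃ e' ∈ A, e' ≠ e ∧ e' ≤ t) ⊆
          T1.filter (fun t => e ≤ t) := by
        intro t ht
        simp only [Finset.mem_filter] at ht
        obtain ⟨ht, e', he', hne, het'⟩ := ht
        simp only [facesAbove, Finset.mem_filter, Finset.mem_univ, true_and] at ht
        have ht2 : t ∈ faces dim 2 := by simp [faces, ht.1]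
        refine Finset.mem_filter.2 ⟨?_, ht.2⟩
        rcases tri t ht2 e he e' he' hne.symm ht.2 het' with h | ⟨u, hu, hue, hue'⟩
        · simp [T1, h]
        · rcases HorL u hu with hu' | hu'
          · exact absurd ⟨u, hu', by simp [Av, he, hue]⟩ hnH
          · have := inTL t ht2 e he e' he' hne.symm ht.2 het' u hu' hue hue'
            simp [T1, this]
      have h1 := P1 e he
      have h2 := wsum_mono (hl0 e) hsub
      have h4 := (cmp_sum hcmp (v := e) (j := 2) (S := T1.filter (fun t => e ≤ t)) (by omega) (by omega) le_rfl
        (by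
          intro t ht
          have := Finset.mem_filter.1 ht
          simp [facesAbove, this.2, hT1d t this.1])).2
      calc ε' * w e = w e * ε' := by ring
        _ ≤ w e * wsum (linkWeight dim d w e) (T1.filter (fun t => e ≤ t)) :=
            mul_le_mul_of_nonneg_left (h1.trans h2) (hw0 e)
        _ ≤ _ := h4
    have s3 : ∑ e ∈ AL, wsum w (T1.filter (fun t => e ≤ t)) ≤ N * wsum w T1 := by
      refine double_count (fun v e => v ≤ e) w hw0 N fun t ht => ?_
      have ht2 := hT1d t ht
      refine le_trans ?_ (hcard 1 t (by norm_num) (by omega) (by omega))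
      refine Nat.cast_le.2 (Finset.card_le_card fun v hv => ?_)
      have := Finset.mem_filter.1 hv
      simp [facesBelow, this.2, hdA v (Finset.mem_filter.1 this.1).1]
    calc ε' * wsum w AL = ∑ e ∈ AL, ε' * w e := by unfold wsum; rw [Finset.mul_sum]
      _ ≤ ∑ e ∈ AL, C * wsum w (T1.filter (fun t => e ≤ t)) := Finset.sum_le_sum s2
      _ = C * ∑ e ∈ AL, wsum w (T1.filter (fun t => e ≤ t)) := by rw [Finset.mul_sum]
      _ ≤ C * (N * (k * a * (1 + 2 * C ^ 2 * N))) := by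
          refine mul_le_mul_of_nonneg_left (s3.trans ?_) (by positivity)
          gcongr
  have hsplit : a = wsum w AH + wsum w AL := by
    rw [ha]; unfold wsum
    exact (Finset.sum_filter_add_sum_filter_not A _ _).symm
  have hfin : ε' * a ≤ ε' * (a / 2) := by
    have hCC : C ≤ C ^ 4 := le_self_pow₀ hC (by norm_num)
    calc ε' * a = ε' * wsum w AH + ε' * wsum w AL := by rw [hsplit]; ring
      _ ≤ 2 * C ^ 4 * (N * (k * a * (1 + 2 * C ^ 2 * N))) +
          C ^ 4 * (N * (k * a * (1 + 2 * C ^ 2 * N))) := by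
          refine add_le_add wAH (wAL.trans ?_)
          gcongr
      _ = (3 / 8) * (ε' * a) * (E' * (8 * C ^ 4 * N * (1 + 2 * C ^ 2 * N))) := by
          rw [hk]; ring
      _ ≤ (3 / 8) * (ε' * a) * 1 := by gcongr
      _ ≤ ε' * (a / 2) := by nlinarith [mul_nonneg hε.le ha_nn]
  have ha2 : a ≤ 0 := by
    have := le_of_mul_le_mul_left hfin hε
    linarith
  by_contra hne
  have : 0 < a := Finset.sum_pos (fun x _ => hw x) (Finset.nonempty_iff_ne_empty.2 hne)
  linarith

end Core
end FK

set_option linter.unusedSectionVars false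
set_option linter.unusedVariables false
namespace FK

section SheafLemmas
variable {V : Type*} [Fintype V] [PartialOrder V]
variable {R : Type*} [CommRing R] {dim : V → ℤ} {F : V → Type*}
  [∀ x, AddCommGroup (F x)] [∀ x, Module R (F x)]
  {sgn : V → V → R} {res : ∀ x y : V, x ≤ y → (F x →ₗ[R] F y)}
  {w : V → ℝ} {d : ℤ}

/-- support of a cochain -/
def csupp {i : ℤ} (f : Cochain dim F i) : Finset V :=
  Finset.univ.filter fun y => ∃ h : dim y = i, f ⟨y, h⟩ ≠ 0

/-- support of a link cochain -/
def lsupp {u : V} {i : ℤ} (f : LCochain dim F u i) : Finset V :=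
  Finset.univ.filter fun y => ∃ h : dim y = i ∧ u ≤ y, f ⟨y, h⟩ ≠ 0

lemma mem_csupp {i : ℤ} {f : Cochain dim F i} {y : V} :
    y ∈ csupp f ↔ ∃ h : dim y = i, f ⟨y, h⟩ ≠ 0 := by simp [csupp]

lemma mem_lsupp {u : V} {i : ℤ} {f : LCochain dim F u i} {y : V} :
    y ∈ lsupp f ↔ ∃ h : dim y = i ∧ u ≤ y, f ⟨y, h⟩ ≠ 0 := by simp [lsupp]

lemma csupp_subset {i : ℤ} (f : Cochain dim F i) : csupp f ⊆ faces dim i := by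
  intro y hy
  obtain ⟨h, -⟩ := mem_csupp.1 hy
  simp [faces, h]

lemma sum_subtype_supp {p : V → Prop} (φ : V → ℝ) (q : {x // p x} → Prop) :
    ∑ x : {x : V // p x}, (if q x then φ x.1 else 0) =
      ∑ y ∈ Finset.univ.filter (fun y => ∃ h : p y, q ⟨y, h⟩), φ y := by
  rw [← Finset.sum_filter]
  refine Finset.sum_bij (fun x _ => x.1) ?_ ?_ ?_ ?_
  · intro x hx
    exact Finset.mem_filter.2 ⟨Finset.mem_univ _, x.2, (Finset.mem_filter.1 hx).2⟩
  · intro x _ y _ h; exact Subtype.ext h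
  · intro y hy
    obtain ⟨h, hq⟩ := (Finset.mem_filter.1 hy).2
    exact ⟨⟨y, h⟩, Finset.mem_filter.2 ⟨Finset.mem_univ _, hq⟩, rfl⟩
  · intro x _; rfl

lemma cnorm_eq {i : ℤ} (f : Cochain dim F i) : cnorm dim F w f = wsum w (csupp f) := by
  unfold cnorm wsum csupp
  convert sum_subtype_supp w (fun x : {x : V // dim x = i} => f x ≠ 0)

lemma lnorm_eq {u : V} {i : ℤ} (f : LCochain dim F u i) :
    lnorm dim F w d u f = wsum (linkWeight dim d w u) (lsupp f) := by
  unfold lnorm wsum lsupp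
  convert sum_subtype_supp (linkWeight dim d w u) (fun x : {x : V // dim x = i ∧ u ≤ x} => f x ≠ 0)

/-- restriction of a cochain to a link -/
def restr {i : ℤ} (f : Cochain dim F i) (u : V) : LCochain dim F u i := fun x => f ⟨x.1, x.2.1⟩

lemma cob_eq_lcob {i j : ℤ} (f : Cochain dim F i) (u y : V) (hy : dim y = j ∧ u ≤ y)
    (h : ∀ x (hx : dim x = i), x ≤ y → ¬ u ≤ x → f ⟨x, hx⟩ = 0) :
    lcoboundary dim F sgn res u i j (restr f u) ⟨y, hy⟩ =
      coboundary dim F sgn res i j f ⟨y, hy.1⟩ := by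
  unfold lcoboundary coboundary
  refine Fintype.sum_of_injective
    (fun x : {x : V // dim x = i ∧ u ≤ x} => (⟨x.1, x.2.1⟩ : {x : V // dim x = i})) ?_ _ _ ?_ ?_
  · intro a b hab
    exact Subtype.ext (congrArg (fun z : {x : V // dim x = i} => z.1) hab)
  · rintro ⟨x, hx⟩ hr
    have hu : ¬ u ≤ x := fun hu => hr ⟨⟨x, hx, hu⟩, rfl⟩
    dsimp only
    split_ifs with hxy
    · rw [h x hx hxy hu]; simp
    · rfl
  · rintro ⟨x, hx⟩; rfl

lemma cob_zero {i j : ℤ} : coboundary dim F sgn res i j 0 = 0 := by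
  funext y
  unfold coboundary
  refine Finset.sum_eq_zero fun x _ => ?_
  split_ifs <;> simp

lemma cob_sub {i j : ℤ} (f g : Cochain dim F i) : coboundary dim F sgn res i j (f - g) =
    coboundary dim F sgn res i j f - coboundary dim F sgn res i j g := by
  funext y
  rw [Pi.sub_apply]
  unfold coboundary
  rw [← Finset.sum_sub_distrib]
  refine Finset.sum_congr rfl fun x _ => ?_
  split_ifs <;> simp [smul_sub]

lemma lcob_zero {u : V} {i j : ℤ} : lcoboundary dim F sgn res u i j 0 = 0 := by
  funext y
  unfold lcoboundary
  refine Finset.sum_eq_zero fun x _ => ?_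
  split_ifs <;> simp

lemma cbe_apply {u : V} {i : ℤ} {ε c : ℝ} (hε : 0 ≤ ε) (h : LinkCbeGe dim F sgn res w d u i ε)
    (f : LCochain dim F u i)
    (hc : ∀ g, c ≤ wsum (linkWeight dim d w u) (lsupp (f - lcoboundary dim F sgn res u (i - 1) i g))) :
    ε * c ≤ wsum (linkWeight dim d w u) (lsupp (lcoboundary dim F sgn res u i (i + 1) f)) := by
  rw [← lnorm_eq]
  refine le_trans ?_ (h f)
  refine mul_le_mul_of_nonneg_left ?_ hε
  refine le_csInf ⟨_, Set.mem_image_of_mem _ ⟨0, rfl⟩⟩ ?_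
  rintro _ ⟨_, ⟨g, rfl⟩, rfl⟩
  dsimp only
  rw [lnorm_eq]
  exact hc g

lemma local1 {bot : V} (hP : IsDPoset dim d bot) (hw : ∀ x, 0 < w x) {i : ℤ} {x : V}
    (hx : dim x = i) (g : Cochain dim F i) (hg : coboundary dim F sgn res i (i + 1) g = 0)
    (hgx : g ⟨x, hx⟩ ≠ 0) {ε : ℝ} (hε : 0 ≤ ε) (h : LinkCbeGe dim F sgn res w d x i ε) :
    ε ≤ wsum (linkWeight dim d w x) ((facesAbove dim (i + 1) x).filter fun t =>
      ∃ e' ∈ csupp g, e' ≠ x ∧ e' ≤ t) := by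
  have hl0 : ∀ v x, 0 ≤ linkWeight dim d w v x := linkWeight_nonneg dim d hw
  have h1 := cbe_apply (c := 1) hε h (restr g x) (by
    intro b
    have hz : lcoboundary dim F sgn res x (i - 1) i b ⟨x, hx, le_rfl⟩ = 0 := by
      unfold lcoboundary
      refine Finset.sum_eq_zero ?_
      rintro ⟨y, hy1, hy2⟩ -
      have := dim_mono hP hy2
      omega
    have hm : x ∈ lsupp (restr g x - lcoboundary dim F sgn res x (i - 1) i b) := by
      refine mem_lsupp.2 ⟨⟨hx, le_rfl⟩, ?_⟩
      rw [Pi.sub_apply, hz, sub_zero]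
      exact hgx
    calc (1 : ℝ) = linkWeight dim d w x x := (linkWeight_self hP hw x).symm
      _ ≤ _ := Finset.single_le_sum (fun y _ => hl0 x y) hm)
  rw [mul_one] at h1
  refine h1.trans (wsum_mono (hl0 x) ?_)
  intro t ht
  obtain ⟨ht, hne⟩ := mem_lsupp.1 ht
  refine Finset.mem_filter.2 ⟨by simp [facesAbove, ht], ?_⟩
  by_contra hcon
  push Not at hcon
  apply hne
  rw [cob_eq_lcob g x t ht, hg]
  · rfl
  · intro y hy hyt hxy
    by_contra hgy
    refine hcon y (mem_csupp.2 ⟨hy, hgy⟩) ?_ hyt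
    rintro rfl; exact hxy le_rfl

lemma local2 {bot : V} (hP : IsDPoset dim d bot) (hw : ∀ x, 0 < w x) {C : ℝ} (hC : 1 ≤ C)
    (hcmp : Cmp dim d w C) {v : V} (hv : dim v = 0) (f : Cochain dim F 0)
    {q h0 : ℝ} (hq : q = h0 / (2 * C))
    (hmin : ∀ b : LCochain dim F v 0,
      wsum w (csupp (coboundary dim F sgn res 0 1 f)) ≤
      wsum w (csupp (coboundary dim F sgn res 0 1 (f - extendByZero dim F v b))) + q * w v)
    (hcoc : coboundary dim F sgn res 1 2 (coboundary dim F sgn res 0 1 f) = 0)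
    {ε : ℝ} (hε : 0 ≤ ε) (h : LinkCbeGe dim F sgn res w d v 1 ε)
    (hheavy : h0 < wsum (linkWeight dim d w v)
      ((csupp (coboundary dim F sgn res 0 1 f)).filter fun e => v ≤ e)) :
    ε * wsum (linkWeight dim d w v)
      ((csupp (coboundary dim F sgn res 0 1 f)).filter fun e => v ≤ e) ≤
        2 * C ^ 2 * wsum (linkWeight dim d w v) ((facesAbove dim 2 v).filter fun t =>
          ∃ e ∈ csupp (coboundary dim F sgn res 0 1 f), v ≤ e ∧ e ≤ t ∧
            ∃ e' ∈ csupp (coboundary dim F sgn res 0 1 f), ¬ v ≤ e' ∧ e' ≤ t) := by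
  have hw0 : ∀ x, 0 ≤ w x := fun x => (hw x).le
  have hl0 : ∀ v x, 0 ≤ linkWeight dim d w v x := linkWeight_nonneg dim d hw
  have hC0 : 0 < C := by linarith
  set g := coboundary dim F sgn res 0 1 f with hg
  set Av := (csupp g).filter fun e => v ≤ e with hAv
  have hAvs : Av ⊆ facesAbove dim 1 v := by
    intro e he
    obtain ⟨h1, h2⟩ := Finset.mem_filter.1 he
    obtain ⟨h3, -⟩ := mem_csupp.1 h1
    simp [facesAbove, h3, h2]
  set lA := wsum (linkWeight dim d w v) Av with hlA
  have key : ∀ b : LCochain dim F v 0, lA / (2 * C ^ 2) ≤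
      wsum (linkWeight dim d w v) (lsupp (restr g v - lcoboundary dim F sgn res v 0 1 b)) := by
    intro b
    set B := lsupp (restr g v - lcoboundary dim F sgn res v 0 1 b) with hB
    have hBs : B ⊆ facesAbove dim 1 v := by
      intro e he
      obtain ⟨h1, -⟩ := mem_lsupp.1 he
      simp [facesAbove, h1]
    have hrestr : restr (extendByZero dim F v b) v = b := by
      funext x
      simp [restr, extendByZero, x.2.2]
    have hsub : csupp (coboundary dim F sgn res 0 1 (f - extendByZero dim F v b)) ⊆
        (csupp g).filter (fun e => ¬ v ≤ e) ∪ B := by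
      intro e he
      obtain ⟨he1, hne⟩ := mem_csupp.1 he
      rw [cob_sub, Pi.sub_apply] at hne
      by_cases hve : v ≤ e
      · refine Finset.mem_union_right _ (mem_lsupp.2 ⟨⟨he1, hve⟩, ?_⟩)
        rw [Pi.sub_apply]
        have h2 := cob_eq_lcob (sgn := sgn) (res := res) (j := 1) (extendByZero dim F v b) v e ⟨he1, hve⟩ (by
          intro x hx _ hvx
          simp [extendByZero, hvx])
        rw [hrestr] at h2
        rw [h2]
        exact hne
      · refine Finset.mem_union_left _ (Finset.mem_filter.2 ⟨mem_csupp.2 ⟨he1, ?_⟩, hve⟩)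
        have hz : coboundary dim F sgn res 0 1 (extendByZero dim F v b) ⟨e, he1⟩ = 0 := by
          unfold coboundary
          refine Finset.sum_eq_zero fun x _ => ?_
          split_ifs with hxe
          · have : ¬ v ≤ x.1 := fun hvx => hve (hvx.trans hxe)
            simp [extendByZero, this]
          · rfl
        rw [hz, sub_zero] at hne
        exact hne
    have h1 := hmin b
    have h2 := wsum_mono hw0 hsub
    have h3 := wsum_union_le hw0 ((csupp g).filter (fun e => ¬ v ≤ e)) B
    have h4 : wsum w (csupp g) = wsum w Av + wsum w ((csupp g).filter (fun e => ¬ v ≤ e)) := by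
      unfold wsum
      exact (Finset.sum_filter_add_sum_filter_not _ _ _).symm
    have h5 : wsum w Av ≤ wsum w B + q * w v := by linarith
    have c1 := (cmp_sum hcmp (v := v) (j := 1) (by omega) (by omega) (by norm_num) hAvs).2
    have c2 := (cmp_sum hcmp (v := v) (j := 1) (by omega) (by omega) (by norm_num) hBs).1
    set lB := wsum (linkWeight dim d w v) B
    have hwv := hw v
    have h6 : w v * lA ≤ w v * (C ^ 2 * lB + C * q) := by
      calc w v * lA ≤ C * wsum w Av := c1
        _ ≤ C * (C * (w v * lB) + q * w v) := by
            refine mul_le_mul_of_nonneg_left ?_ hC0.le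
            linarith
        _ = _ := by ring
    have h7 := le_of_mul_le_mul_left h6 hwv
    have h8 : C * q = h0 / 2 := by rw [hq]; field_simp
    rw [div_le_iff₀ (by positivity)]
    have : h0 < lA := hheavy
    nlinarith
  have h1 := cbe_apply (c := lA / (2 * C ^ 2)) hε h (restr g v) key
  have h2 : lsupp (lcoboundary dim F sgn res v 1 (1 + 1) (restr g v)) ⊆
      ((facesAbove dim 2 v).filter fun t =>
          ∃ e ∈ csupp g, v ≤ e ∧ e ≤ t ∧ ∃ e' ∈ csupp g, ¬ v ≤ e' ∧ e' ≤ t) := by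
    intro t ht
    obtain ⟨ht, hne⟩ := mem_lsupp.1 ht
    refine Finset.mem_filter.2 ⟨?_, ?_⟩
    · have : dim t = 2 := by rw [ht.1]; norm_num
      simp [facesAbove, this, ht.2]
    · obtain ⟨e, he⟩ : ∃ e, e ∈ csupp g ∧ v ≤ e ∧ e ≤ t := by
        by_contra hcon
        push Not at hcon
        apply hne
        unfold lcoboundary
        refine Finset.sum_eq_zero fun x _ => ?_
        split_ifs with hxt
        · have : restr g v x = 0 := by
            by_contra hx0
            exact hcon x.1 (mem_csupp.2 ⟨x.2.1, hx0⟩) x.2.2 hxt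
          rw [this]; simp
        · rfl
      refine ⟨e, he.1, he.2.1, he.2.2, ?_⟩
      by_contra hcon
      push Not at hcon
      apply hne
      rw [cob_eq_lcob g v t ht]
      · exact congrFun hcoc _
      · intro y hy hyt hvy
        by_contra hgy
        exact hcon y (mem_csupp.2 ⟨hy, hgy⟩) hvy hyt
  have h3 := h1.trans (wsum_mono (hl0 v) h2)
  have h4 : ε * lA = 2 * C ^ 2 * (ε * (lA / (2 * C ^ 2))) := by field_simp
  rw [h4]
  gcongr

lemma cob_cob {bot : V} (hP : IsDPoset dim d bot) (hs : IsOrientation R dim sgn)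
    (hr : IsSheafRes R F res) (f : Cochain dim F 0) :
    coboundary dim F sgn res 1 2 (coboundary dim F sgn res 0 1 f) = 0 := by
  funext t
  have e1 : ∀ (v : {x : V // dim x = 0}) (hvt : v.1 ≤ t.1),
      ∑ e : {x : V // dim x = 1}, (if v.1 ≤ e.1 ∧ e.1 ≤ t.1 then sgn t.1 e.1 * sgn e.1 v.1 else 0) = 0 := by
    intro v hvt
    have h := hs.sum_eq_zero hvt (by rw [t.2, v.2]; norm_num)
    refine Eq.trans ?_ h
    rw [← Finset.sum_filter]
    refine Finset.sum_bij (fun x _ => x.1) ?_ ?_ ?_ ?_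
    · intro x hx
      have hx := (Finset.mem_filter.1 hx).2
      refine Finset.mem_filter.2 ⟨Finset.mem_univ _, lt_of_le_of_ne hx.1 ?_, lt_of_le_of_ne hx.2 ?_⟩
      · intro heq
        have := v.2; rw [heq, x.2] at this; norm_num at this
      · intro heq
        have := x.2; rw [heq, t.2] at this; norm_num at this
    · intro x _ y _ h; exact Subtype.ext h
    · intro y hy
      have hy := (Finset.mem_filter.1 hy).2
      have h1 := hP.dim_strictMono hy.1
      have h2 := hP.dim_strictMono hy.2
      rw [v.2] at h1; rw [t.2] at h2
      exact ⟨⟨y, by omega⟩, Finset.mem_filter.2 ⟨Finset.mem_univ _, hy.1.le, hy.2.le⟩, rfl⟩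
    · intro x _; rfl
  have e2 : coboundary dim F sgn res 1 2 (coboundary dim F sgn res 0 1 f) t =
      ∑ e : {x : V // dim x = 1}, ∑ v : {x : V // dim x = 0},
        if h : v.1 ≤ t.1 then (if v.1 ≤ e.1 ∧ e.1 ≤ t.1 then sgn t.1 e.1 * sgn e.1 v.1 else 0) •
          res v.1 t.1 h (f v) else 0 := by
    unfold coboundary
    refine Finset.sum_congr rfl fun e _ => ?_
    by_cases het : e.1 ≤ t.1
    · rw [dif_pos het, map_sum, Finset.smul_sum]
      refine Finset.sum_congr rfl fun v _ => ?_
      by_cases hve : v.1 ≤ e.1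
      · rw [dif_pos hve, dif_pos (hve.trans het), if_pos ⟨hve, het⟩, map_smul, smul_smul,
          ← hr.trans hve het]
        rfl
      · rw [dif_neg hve, map_zero, smul_zero]
        split_ifs with h1 h2
        · exact absurd h2.1 hve
        · simp
        · rfl
    · rw [dif_neg het]
      symm
      refine Finset.sum_eq_zero fun v _ => ?_
      split_ifs with h1 h2
      · exact absurd h2.2 het
      · simp
      · rfl
  rw [e2, Finset.sum_comm]
  refine Finset.sum_eq_zero fun v _ => ?_
  by_cases hvt : v.1 ≤ t.1
  · simp only [dif_pos hvt]
    rw [← Finset.sum_smul, e1 v hvt, zero_smul]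
  · simp [hvt]

lemma exists_min (f : Cochain dim F 0) (q : ℝ) (g : Cochain dim F 0 → Cochain dim F 1) :
    ∃ f' : Cochain dim F 0, ∀ φ, wsum w (csupp (g f')) + q * wsum w (csupp (f - f')) ≤
      wsum w (csupp (g φ)) + q * wsum w (csupp (f - φ)) := by
  let Φ : Cochain dim F 0 → ℝ := fun φ => wsum w (csupp (g φ)) + q * wsum w (csupp (f - φ))
  have hfin : (Set.range Φ).Finite := by
    refine (Set.finite_range (fun p : Finset V × Finset V => wsum w p.1 + q * wsum w p.2)).subset ?_
    rintro _ ⟨φ, rfl⟩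
    exact ⟨(csupp (g φ), csupp (f - φ)), rfl⟩
  obtain ⟨_, ⟨f', rfl⟩, h⟩ := Set.exists_min_image (Set.range Φ) id hfin ⟨Φ f, f, rfl⟩
  exact ⟨f', fun φ => h _ ⟨φ, rfl⟩⟩

lemma dist_le (hw : ∀ x, 0 < w x) {i : ℤ} (f g : Cochain dim F i) {S : Set (Cochain dim F i)}
    (hg : g ∈ S) : distTo dim F w f S ≤ wsum w (csupp (f - g)) := by
  unfold distTo
  rw [← cnorm_eq]
  refine csInf_le ⟨0, ?_⟩ ⟨g, hg, rfl⟩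
  rintro _ ⟨φ, -, rfl⟩
  dsimp only
  rw [cnorm_eq]
  exact wsum_nonneg (fun x => (hw x).le) _

end SheafLemmas
end FK
/-- criterion for 0-cosystolic expansion. -/
theorem statement1 (Fc : ℕ) (L : ℝ) (hL : 1 ≤ L) :
    ∃ E E' E'' E''' : ℝ, 0 < E ∧ 0 < E' ∧ 0 < E'' ∧ 0 < E''' ∧
      ∀ (V : Type) (_ : Fintype V) (_ : PartialOrder V) (dim : V → ℤ) (d : ℤ) (bot : V),
        FK.IsDPoset dim d bot → 2 ≤ d →
        (∀ i j k : ℤ, -1 ≤ i → i ≤ j → j ≤ k → k ≤ d →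
          (FK.Fmax dim i j k : ℝ) ≤ L * (FK.Fmin dim i j k : ℝ)) →
        FK.Fmax dim (-1) 0 2 ≤ Fc → FK.Fmax dim (-1) 1 2 ≤ Fc →
        ∀ w : V → ℝ, FK.IsProperWeight dim d w →
        ∀ (R : Type) (_ : CommRing R) (sgn : V → V → R), FK.IsOrientation R dim sgn →
        ∀ (F : V → Type) (_ : ∀ x, AddCommGroup (F x)) (_ : ∀ x, Module R (F x))
          (res : ∀ x y : V, x ≤ y → (F x →ₗ[R] F y)), FK.IsSheafRes R F res →
        ∀ ε ε' : ℝ, 0 < ε → 0 < ε' →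
        ∀ α0 β0 αm1 αpar βpar βm1 : ℝ,
          0 ≤ α0 → 0 ≤ β0 → 0 ≤ αm1 → 0 ≤ αpar → 0 ≤ βpar → 0 < βm1 →
        -- (1a)  cbe₋₁(X_v, w_v, 𝓕_v) ≥ ε for v ∈ X(0)
        (∀ v : V, dim v = 0 → FK.LinkCbeGe dim F sgn res w d v 0 ε) →
        -- (1b)  cbe₋₁(X_e, w_e, 𝓕_e) ≥ ε' for e ∈ X(1)
        (∀ e : V, dim e = 1 → FK.LinkCbeGe dim F sgn res w d e 1 ε') →
        -- (1c)  cbe₀(X_v, w_v, 𝓕_v) ≥ ε' for v ∈ X(0)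
        (∀ v : V, dim v = 0 → FK.LinkCbeGe dim F sgn res w d v 1 ε') →
        -- (2a)
        (∀ v : V, dim v = 0 → FK.LinkUgrSkeletonExpander dim d w v α0 β0) →
        -- (2b)
        FK.UgrSkeletonExpander dim w αm1 βm1 →
        -- (2c)
        FK.NI112SkeletonExpander dim w bot αpar βpar →
        αm1 < E * ε →
        ∀ hm1 h0 hpar : ℝ,
          0 < hm1 → hm1 ≤ 1 → 0 < h0 → h0 ≤ 1 → 0 < hpar → hpar ≤ 1 →
          (α0 + β0 * h0) + (αpar + βpar * hpar) + (αm1 + βm1 * hm1) / h0 ≤ E' * ε' →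
        (∀ f : FK.Cochain dim F 0,
            E'' / (h0⁻¹ * hm1⁻¹ + hpar⁻¹) *
                FK.distTo dim F w f (FK.cocycles dim F sgn res 0) ≤
              FK.cnorm dim F w (FK.coboundary dim F sgn res 0 1 f)) ∧
        (∀ f : FK.Cochain dim F 0,
            f ∈ FK.cocycles dim F sgn res 0 → f ∉ FK.coboundariesSet dim F sgn res 0 →
            E''' * (E * ε - αm1) / βm1 ≤ FK.cnorm dim F w f) := by
  obtain ⟨N, hNdef⟩ : ∃ N : ℝ, N = max (Fc : ℝ) 1 := ⟨_, rfl⟩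
  have hN1 : 1 ≤ N := hNdef ▸ le_max_right _ _
  have hNF : (Fc : ℝ) ≤ N := hNdef ▸ le_max_left _ _
  obtain ⟨C, hCdef⟩ : ∃ C : ℝ, C = L ^ 3 * N := ⟨_, rfl⟩
  have hC1 : 1 ≤ C := by
    rw [hCdef]
    exact one_le_mul_of_one_le_of_one_le (one_le_pow₀ hL) hN1
  have hN0 : 0 < N := by linarith
  have hC0 : 0 < C := by linarith
  refine ⟨1 / (C * N), 1 / (8 * C ^ 4 * N * (1 + 2 * C ^ 2 * N)), 1 / (2 * C * N), 1,
    by positivity, by positivity, by positivity, by positivity, ?_⟩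
  intro V _ _ dim d bot hP hd hLow h02 h12 w hw R _ sgn hs F _ _ res hr ε ε' hε hε'
    α0 β0 αm1 αpar βpar βm1 ha0 hb0 ham hap hbp hbm h1a h1b h1c h2a h2b h2c hαE
    hm1 h0 hpar hhm hhm' hh0 hh0' hhp hhp' hsum
  have hw0 : ∀ x, 0 ≤ w x := fun x => (hw.pos x).le
  have hcmp : FK.Cmp dim d w C := by
    intro x y hx hxy hlt hy
    rw [hCdef]
    exact FK.weight_compare hP hd h02 h12 hL hLow hw hN1 hNF hx hxy hlt hy
  have hcard : ∀ (i : ℤ) (y : V), 0 ≤ i → i < dim y → dim y ≤ 2 →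
      ((FK.facesBelow dim i y).card : ℝ) ≤ N := by
    intro i y hi hiy hy
    refine le_trans ?_ hNF
    exact_mod_cast FK.card_below_le hP hd h02 h12 hi hiy hy
  constructor
  · intro f
    obtain ⟨K, hK⟩ : ∃ K, K = h0⁻¹ * hm1⁻¹ + hpar⁻¹ := ⟨_, rfl⟩
    rw [← hK, FK.cnorm_eq]
    have hK0 : 0 < K := by rw [hK]; positivity
    have hKa : K⁻¹ ≤ h0 * hm1 := by
      rw [inv_le_comm₀ hK0 (by positivity), mul_inv, hK]
      have : 0 < hpar⁻¹ := by positivity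
      linarith
    have hKb : K⁻¹ ≤ hpar := by
      rw [inv_le_comm₀ hK0 (by positivity), hK]
      have : 0 < h0⁻¹ * hm1⁻¹ := by positivity
      linarith
    have hEK : 1 / (2 * C * N) / K = 1 / (2 * C * N) * K⁻¹ := by rw [div_eq_mul_inv]
    by_cases hbig : 1 / (2 * C * N) / K ≤ FK.wsum w (FK.csupp (FK.coboundary dim F sgn res 0 1 f))
    · have h1 := FK.dist_le hw.pos f 0 (S := FK.cocycles dim F sgn res 0) FK.cob_zero
      have h2 := FK.wsum_mono hw0 (FK.csupp_subset (f - 0))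
      have h3 := FK.sum_weight_le hw 0
      have h4 : FK.distTo dim F w f (FK.cocycles dim F sgn res 0) ≤ 1 := by linarith
      refine le_trans ?_ hbig
      exact mul_le_of_le_one_right (by positivity) h4
    · push Not at hbig
      obtain ⟨q, hq⟩ : ∃ q, q = h0 / (2 * C) := ⟨_, rfl⟩
      have hq0 : 0 < q := by rw [hq]; positivity
      obtain ⟨f', hf'⟩ := FK.exists_min (w := w) f q (FK.coboundary dim F sgn res 0 1)
      have hcoc := FK.cob_cob hP hs hr f'
      have hff := hf' f
      have hz : FK.wsum w (FK.csupp (f - f)) = 0 := by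
        rw [sub_self]
        have : FK.csupp (0 : FK.Cochain dim F 0) = ∅ := by
          ext x; simp [FK.mem_csupp]
        rw [this]; simp [FK.wsum]
      rw [hz, mul_zero, add_zero] at hff
      have hn1 := FK.wsum_nonneg hw0 (FK.csupp (f - f'))
      have hn2 := FK.wsum_nonneg hw0 (FK.csupp (FK.coboundary dim F sgn res 0 1 f'))
      have hsmall : FK.wsum w (FK.csupp (FK.coboundary dim F sgn res 0 1 f')) ≤
          1 / (2 * C * N) * K⁻¹ := by
        rw [← hEK]
        have := mul_nonneg hq0.le hn1
        linarith
      have hA0 : FK.csupp (FK.coboundary dim F sgn res 0 1 f') = ∅ := by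
        refine FK.core hP hw.pos hC1 hN1 hcmp hcard hε' ha0 hb0 ham hap hbp hbm h2a h2b h2c
          hhm hh0 hhp hsum (by positivity) (le_of_eq (by field_simp)) (FK.csupp_subset _) ?_ ?_ ?_ ?_
        · calc C * N * FK.wsum w (FK.csupp (FK.coboundary dim F sgn res 0 1 f'))
              ≤ C * N * (1 / (2 * C * N) * K⁻¹) := by gcongr
            _ = K⁻¹ / 2 := by field_simp
            _ ≤ K⁻¹ := by have : 0 < K⁻¹ := by positivity
                          linarith
            _ ≤ _ := hKa
        · refine hsmall.trans (le_trans ?_ hKb)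
          refine mul_le_of_le_one_left (by positivity) ?_
          rw [div_le_one (by positivity)]
          nlinarith
        · intro e he
          obtain ⟨he1, hne⟩ := FK.mem_csupp.1 he
          exact FK.local1 hP hw.pos he1 _ hcoc hne hε'.le (h1b e he1)
        · intro v hv hheavy
          refine FK.local2 hP hw.pos hC1 hcmp hv f' hq ?_ hcoc hε'.le (h1c v hv) hheavy
          intro b
          have hb := hf' (f' - FK.extendByZero dim F v b)
          have hsub : FK.csupp (f - (f' - FK.extendByZero dim F v b)) ⊆
              FK.csupp (f - f') ∪ {v} := by
            intro x hx
            obtain ⟨hx0, hne⟩ := FK.mem_csupp.1 hx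
            by_cases hvx : v ≤ x
            · have := FK.eq_of_le_dim hP hvx (by omega)
              simp [this]
            · refine Finset.mem_union_left _ (FK.mem_csupp.2 ⟨hx0, ?_⟩)
              simpa [FK.extendByZero, hvx] using hne
          have h1 := FK.wsum_mono hw0 hsub
          have h2 := FK.wsum_union_le hw0 (FK.csupp (f - f')) {v}
          have h3 : FK.wsum w {v} = w v := by simp [FK.wsum]
          have h4 := mul_le_mul_of_nonneg_left (h1.trans h2) hq0.le
          rw [h3] at h4
          linarith
      have hmem : f' ∈ FK.cocycles dim F sgn res 0 := by
        show FK.coboundary dim F sgn res 0 1 f' = 0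
        funext x
        by_contra hne
        have : x.1 ∈ FK.csupp (FK.coboundary dim F sgn res 0 1 f') := FK.mem_csupp.2 ⟨x.2, hne⟩
        rw [hA0] at this
        simp at this
      have h1 := FK.dist_le hw.pos f f' hmem
      have h2 : 1 / (2 * C * N) / K ≤ q := by
        rw [hEK, hq]
        calc 1 / (2 * C * N) * K⁻¹ ≤ 1 / (2 * C) * h0 := by
              have a1 : 1 / (2 * C * N) ≤ 1 / (2 * C) := by
                apply one_div_le_one_div_of_le (by positivity)
                nlinarith
              have a2 : K⁻¹ ≤ h0 := hKa.trans (mul_le_of_le_one_right hh0.le hhm')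
              gcongr
          _ = _ := by ring
      calc _ ≤ 1 / (2 * C * N) / K * FK.wsum w (FK.csupp (f - f')) := by gcongr
        _ ≤ q * FK.wsum w (FK.csupp (f - f')) := by gcongr
        _ ≤ _ := by linarith
  · intro f hf hnf
    rw [FK.cnorm_eq]
    have hne : (FK.csupp f).Nonempty := by
      by_contra hcon
      rw [Finset.not_nonempty_iff_eq_empty] at hcon
      apply hnf
      refine ⟨0, ?_⟩
      rw [FK.cob_zero]
      funext x
      by_contra h
      have : x.1 ∈ FK.csupp f := FK.mem_csupp.2 ⟨x.2, fun h' => h h'.symm⟩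
      rw [hcon] at this
      simp at this
    obtain ⟨A, hA⟩ : ∃ A, A = FK.csupp f := ⟨_, rfl⟩
    have hAs : A ⊆ FK.faces dim 0 := hA ▸ FK.csupp_subset f
    rw [← hA] at hne ⊢
    have ha : 0 < FK.wsum w A := Finset.sum_pos (fun x _ => hw.pos x) hne
    have hdA : ∀ v ∈ A, dim v = 0 := fun v hv => by simpa [FK.faces] using hAs hv
    obtain ⟨E2, hE2⟩ : ∃ E2, E2 = (FK.faces dim 1).filter fun e =>
      ∃ x ∈ A, ∃ y ∈ A, x ≠ y ∧ x ≤ e ∧ y ≤ e := ⟨_, rfl⟩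
    have hexp := h2b A hAs
    rw [← hE2] at hexp
    have s1 : ∀ v ∈ A, ε * w v ≤ C * FK.wsum w (E2.filter fun e => v ≤ e) := by
      intro v hv
      have hv0 := hdA v hv
      obtain ⟨_, hfv⟩ := FK.mem_csupp.1 (hA ▸ hv)
      have h1 := FK.local1 hP hw.pos hv0 f hf hfv hε.le (h1a v hv0)
      rw [← hA] at h1
      have hsub : ((FK.facesAbove dim (0 + 1) v).filter fun t => ∃ e' ∈ A, e' ≠ v ∧ e' ≤ t) ⊆
          E2.filter fun e => v ≤ e := by
        intro t ht
        simp only [FK.facesAbove, Finset.mem_filter, Finset.mem_univ, true_and, zero_add] at ht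
        obtain ⟨⟨ht1, ht2⟩, e', he', hne', het'⟩ := ht
        refine Finset.mem_filter.2 ⟨?_, ht2⟩
        rw [hE2]
        refine Finset.mem_filter.2 ⟨by simp [FK.faces, ht1], v, hv, e', he', hne'.symm, ht2, het'⟩
      have h2 := FK.wsum_mono (FK.linkWeight_nonneg dim d hw.pos v) hsub
      have h3 := (FK.cmp_sum hcmp (v := v) (j := 1) (S := E2.filter fun e => v ≤ e)
        (by omega) (by omega) (by norm_num) (by
          intro t ht
          obtain ⟨h4, h5⟩ := Finset.mem_filter.1 ht
          rw [hE2] at h4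
          have h6 : dim t = 1 := by simpa [FK.faces] using (Finset.mem_filter.1 h4).1
          simp [FK.facesAbove, h5, h6])).2
      calc ε * w v = w v * ε := by ring
        _ ≤ w v * FK.wsum (FK.linkWeight dim d w v) (E2.filter fun e => v ≤ e) :=
            mul_le_mul_of_nonneg_left (h1.trans h2) (hw0 v)
        _ ≤ _ := h3
    have s2 : ∑ v ∈ A, FK.wsum w (E2.filter fun e => v ≤ e) ≤ N * FK.wsum w E2 := by
      refine FK.double_count (fun v e => v ≤ e) w hw0 N fun t ht => ?_
      rw [hE2] at ht
      have ht1 : dim t = 1 := by simpa [FK.faces] using (Finset.mem_filter.1 ht).1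
      refine le_trans ?_ (hcard 0 t le_rfl (by omega) (by omega))
      refine Nat.cast_le.2 (Finset.card_le_card fun v hv => ?_)
      have := Finset.mem_filter.1 hv
      simp [FK.facesBelow, this.2, hdA v this.1]
    have s3 : ε * FK.wsum w A ≤ C * N * (αm1 * FK.wsum w A + βm1 * FK.wsum w A ^ 2) := by
      calc ε * FK.wsum w A = ∑ v ∈ A, ε * w v := by unfold FK.wsum; rw [Finset.mul_sum]
        _ ≤ ∑ v ∈ A, C * FK.wsum w (E2.filter fun e => v ≤ e) := Finset.sum_le_sum s1
        _ = C * ∑ v ∈ A, FK.wsum w (E2.filter fun e => v ≤ e) := by rw [Finset.mul_sum]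
        _ ≤ C * (N * FK.wsum w E2) := by gcongr
        _ ≤ C * (N * (αm1 * FK.wsum w A + βm1 * FK.wsum w A ^ 2)) := by gcongr
        _ = _ := by ring
    rw [one_mul, div_le_iff₀ hbm, sub_le_iff_le_add, one_div, inv_mul_le_iff₀ (by positivity)]
    refine le_of_mul_le_mul_right ?_ ha
    calc ε * FK.wsum w A ≤ _ := s3
      _ = _ := by ring
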